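/- Let 𝒲 be a Banach space with a Schauder basis (e_n) such that no infinite-dimensional closed subspace of 𝒲 is minimal. Then there exist a block subspace 𝒳 = [x_n] of 𝒲 and a countable ordinal α such that 𝒳 = [x_n] is α-tight. -/

import Mathlib

open Filter Topology

namespace Rosendal

variable {𝒲 : Type} [NormedAddCommGroup 𝒲] [NormedSpace ℝ 𝒲]

/-- `(e n)` is a Schauder basis of the Banach space `𝒲`: every vector has a unique
representation as a norm-convergent series `∑ a n • e n`. -/
def IsSchauderBasis (e : ℕ → 𝒲) : Prop :=
  ∀ x : 𝒲, ∃! a : ℕ → ℝ,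
    Tendsto (fun N => ∑ i ∈ Finset.range N, a i • e i) atTop (𝓝 x)

/-- `x` is a linear combination of the vectors `b i`, `i ∈ s`. -/
def SuppIn (b : ℕ → 𝒲) (x : 𝒲) (s : Finset ℕ) : Prop :=
  ∃ a : ℕ → ℝ, x = ∑ i ∈ s, a i • b i

/-- `(y n)` is a block sequence with respect to the basic sequence `(b n)`: a sequence of
nonzero finite linear combinations of the `b i` with successive supports. -/
def IsBlockSeq (b : ℕ → 𝒲) (y : ℕ → 𝒲) : Prop :=
  (∀ n, y n ≠ 0) ∧
  ∃ D : ℕ → Finset ℕ, (∀ n, SuppIn b (y n) (D n)) ∧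
    ∀ n, ∀ i ∈ D n, ∀ j ∈ D (n + 1), i < j

/-- The closed linear span of a set. -/
noncomputable def closedSpan (S : Set 𝒲) : Submodule ℝ 𝒲 :=
  (Submodule.span ℝ S).topologicalClosure

/-- `(x i)_{i<k} ∼_K (y i)_{i<k}`:
`(1/K)‖∑ a i • x i‖ ≤ ‖∑ a i • y i‖ ≤ K‖∑ a i • x i‖` for all scalars. -/
def SeqEquiv (K : ℝ) (k : ℕ) (x y : ℕ → 𝒲) : Prop :=
  ∀ a : ℕ → ℝ,
    (1 / K) * ‖∑ i ∈ Finset.range k, a i • x i‖ ≤ ‖∑ i ∈ Finset.range k, a i • y i‖ ∧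
    ‖∑ i ∈ Finset.range k, a i • y i‖ ≤ K * ‖∑ i ∈ Finset.range k, a i • x i‖

/-- The tree `T((x n), Y, K)` of finite sequences `(y 0, …, y k)` of vectors of `Y` that are
`K`-equivalent to `(x 0, …, x k)`, ordered by end-extension. -/
def embTree (x : ℕ → 𝒲) (Y : Set 𝒲) (K : ℝ) : Set (List 𝒲) :=
  {l | (∀ v ∈ l, v ∈ Y) ∧ SeqEquiv K l.length (fun i => l.getD i 0) x}

open Classical in
/-- The rank of a tree of finite sequences: if the proper end-extension relation is
well-founded (equivalently, for trees, there is no infinite branch), this is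
`sup { ρ(s) + 1 : s ∈ T }` where `ρ` is the usual rank function; otherwise it is `∞ = ⊤`. -/
noncomputable def treeRank (T : Set (List 𝒲)) : WithTop Ordinal :=
  if h : WellFounded (fun t s : T => s.val <+: t.val ∧ s.val ≠ t.val) then
    ((⨆ s : T, Order.succ ((h.apply s).rank) : Ordinal) : WithTop Ordinal)
  else ⊤

open Classical in
/-- The embeddability index `Emb((x n), Y) = sup_{K ≥ 1} rank T((x n), Y, K)`. -/
noncomputable def embIndex (x : ℕ → 𝒲) (Y : Set 𝒲) : WithTop Ordinal :=
  if ∃ K : ℝ, 1 ≤ K ∧ treeRank (embTree x Y K) = ⊤ then ⊤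
  else ((sSup {o : Ordinal | ∃ K : ℝ, 1 ≤ K ∧
      (o : WithTop Ordinal) = treeRank (embTree x Y K)} : Ordinal) : WithTop Ordinal)

/-- `(I m)` is a sequence of successive nonempty finite intervals `I 0 < I 1 < …` of `ℕ`. -/
def IntervalSeq (I : ℕ → Finset ℕ) : Prop :=
  (∀ m, ∃ a b : ℕ, a ≤ b ∧ I m = Finset.Icc a b) ∧
  ∀ m, ∀ i ∈ I m, ∀ j ∈ I (m + 1), i < j

/-- The closed subspace `[b n : n ∉ ⋃_{m ∈ A} I m]`. -/
noncomputable def residualSpace (b : ℕ → 𝒲) (I : ℕ → Finset ℕ) (A : Set ℕ) :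
    Submodule ℝ 𝒲 :=
  closedSpan {v | ∃ n : ℕ, (∀ m ∈ A, n ∉ I m) ∧ v = b n}

/-- The space `[b n]` with its basis `(b n)` is `α`-tight. -/
def IsAlphaTight (b : ℕ → 𝒲) (α : Ordinal) : Prop :=
  ∀ y : ℕ → 𝒲, IsBlockSeq b y →
    ∃ I : ℕ → Finset ℕ, IntervalSeq I ∧
      ∀ A : Set ℕ, A.Infinite →
        embIndex y (residualSpace b I A : Set 𝒲) ≤ (α : WithTop Ordinal)

/-- The space `[b n]` with its basis `(b n)` is `α`-minimal: every block subspace `[z n]`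
`α`-embeds into every infinite-dimensional subspace `Y ⊆ [b n]`. -/
def IsAlphaMinimal (b : ℕ → 𝒲) (α : Ordinal) : Prop :=
  ∀ z : ℕ → 𝒲, IsBlockSeq b z →
    ∀ Y : Submodule ℝ 𝒲, (Y : Set 𝒲) ⊆ (closedSpan (Set.range b) : Set 𝒲) →
      ¬FiniteDimensional ℝ Y →
        (α : WithTop Ordinal) ≤ embIndex z (Y : Set 𝒲)

/-- `X` embeds isomorphically into `Y` (as an isomorphism onto its image). -/
def LinIsoEmbeds (X Y : Submodule ℝ 𝒲) : Prop :=
  ∃ T : X →ₗ[ℝ] 𝒲, (∀ v : X, T v ∈ Y) ∧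
    ∃ c C : ℝ, 0 < c ∧ ∀ v : X, c * ‖v‖ ≤ ‖T v‖ ∧ ‖T v‖ ≤ C * ‖v‖

/-- `X` is a minimal space: it embeds isomorphically into every infinite-dimensional
closed subspace of itself. -/
def IsMinimalSpace (X : Submodule ℝ 𝒲) : Prop :=
  ∀ Y : Submodule ℝ 𝒲, Y ≤ X → IsClosed (Y : Set 𝒲) → ¬FiniteDimensional ℝ Y →
    LinIsoEmbeds X Y

/-- `F` embeds into `Y` with constant `K`. -/
def KEmbeds (K : ℝ) (F Y : Submodule ℝ 𝒲) : Prop :=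
  ∃ T : F →ₗ[ℝ] 𝒲, (∀ v : F, T v ∈ Y) ∧
    ∀ v : F, (1 / K) * ‖v‖ ≤ ‖T v‖ ∧ ‖T v‖ ≤ K * ‖v‖

end Rosendal

namespace Rosendal

/-!
By density, everything happens inside the countable `ℚ`-vector space of finitely supported rational
sequences, which the basis maps into `𝒲`. In the embedding game on a subspace `M` that contains
nonzero vectors supported arbitrarily far out, the first player plays finite sets of vectors of a
subspace `L ≤ M` together with integers `n`; the second player extends a `C`-isomorphism to these
vectors, and may only use the first `N` unit vectors and vectors of `M` supported beyond `n` to span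
the images.

If the second player wins for some `L`, `C` and `N` in every such `M`, then a diagonal argument
makes `C`, `N` and the positions won independent of the subspace. Two runs of the game, in which the
targets of the first are the challenges of the second, then compose to an embedding of a fixed block
subspace into each of its own block subspaces, so it is minimal.

Otherwise the second player has no winning position inside the span of some block sequence `x`. The
number of rounds for which an embedding of a sequence `y` into `[x]` can be continued is measured by
an ordinal. If these ordinals were unbounded in `ω₁`, countability of the set of choices would allow
to construct a single `y` for which the second player wins, so they are bounded by some `α < ω₁`.
Choose the intervals so long that, after the removal of infinitely many of them, every step in the
embedding tree gives a move of the game in which all new indices exceed the relevant threshold. Then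
the ordinals decrease strictly along the tree, whose rank is at most `α + 1`.
-/

section PartialSums

variable {𝒲 : Type} [NormedAddCommGroup 𝒲] [NormedSpace ℝ 𝒲] {e : ℕ → 𝒲}

/-- The `n`-th increment of a sequence converging at `∞`. -/
noncomputable def incrementCLM (𝒲 : Type*) [NormedAddCommGroup 𝒲] [NormedSpace ℝ 𝒲] (n : ℕ) :
    C(OnePoint ℕ, 𝒲) →L[ℝ] 𝒲 :=
  ContinuousMap.evalCLM ℝ ((n + 1 : ℕ) : OnePoint ℕ) - ContinuousMap.evalCLM ℝ (n : OnePoint ℕ)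

/-- The convergent sequences of partial sums of series `∑ a n • e n`, encoded as continuous
functions on the one-point compactification of `ℕ`; the value at `∞` is the sum of the series. -/
noncomputable def partialSumSpace (e : ℕ → 𝒲) : Submodule ℝ C(OnePoint ℕ, 𝒲) :=
  (⊥ : Submodule ℝ 𝒲).comap (ContinuousMap.evalCLM ℝ ((0 : ℕ) : OnePoint ℕ)).toLinearMap ⊓
    ⨅ n : ℕ, (ℝ ∙ e n).comap (incrementCLM 𝒲 n).toLinearMap

theorem mem_partialSumSpace {f : C(OnePoint ℕ, 𝒲)} :
    f ∈ partialSumSpace e ↔ f ((0 : ℕ) : OnePoint ℕ) = 0 ∧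
      ∀ n : ℕ, f ((n + 1 : ℕ) : OnePoint ℕ) - f (n : OnePoint ℕ) ∈ ℝ ∙ e n := by
  simp [partialSumSpace, incrementCLM]

theorem isClosed_partialSumSpace : IsClosed (partialSumSpace e : Set C(OnePoint ℕ, 𝒲)) := by
  rw [partialSumSpace, Submodule.coe_inf, Submodule.coe_iInf]
  exact (isClosed_singleton.preimage (ContinuousMap.evalCLM ℝ _).continuous).inter <|
    isClosed_iInter fun n ↦
      (Submodule.closed_of_finiteDimensional (ℝ ∙ e n)).preimage (incrementCLM 𝒲 n).continuous

theorem exists_eq_sum_of_mem_partialSumSpace {f : C(OnePoint ℕ, 𝒲)}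
    (hf : f ∈ partialSumSpace e) :
    ∃ a : ℕ → ℝ, ∀ n : ℕ, f (n : OnePoint ℕ) = ∑ i ∈ Finset.range n, a i • e i := by
  obtain ⟨hf₀, hf⟩ := mem_partialSumSpace.1 hf
  choose a ha using fun n ↦ Submodule.mem_span_singleton.1 (hf n)
  refine ⟨a, fun n ↦ ?_⟩
  rw [Finset.sum_congr rfl fun i _ ↦ ha i,
    Finset.sum_range_sub fun n : ℕ ↦ f (n : OnePoint ℕ), hf₀, sub_zero]

theorem exists_mem_partialSumSpace {a : ℕ → ℝ} {x : 𝒲}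
    (h : Tendsto (fun N ↦ ∑ i ∈ Finset.range N, a i • e i) atTop (𝓝 x)) :
    ∃ f ∈ partialSumSpace e, f OnePoint.infty = x ∧
      ∀ n : ℕ, f (n : OnePoint ℕ) = ∑ i ∈ Finset.range n, a i • e i := by
  refine ⟨OnePoint.continuousMapMkNat _ x h, mem_partialSumSpace.2 ⟨rfl, fun n ↦ ?_⟩, rfl,
    fun _ ↦ rfl⟩
  change ∑ i ∈ Finset.range (n + 1), a i • e i - ∑ i ∈ Finset.range n, a i • e i ∈ ℝ ∙ e n
  rw [Finset.sum_range_succ_sub_sum]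
  exact Submodule.smul_mem _ _ (Submodule.mem_span_singleton_self _)

theorem tendsto_sum_range_single (j : ℕ) :
    Tendsto (fun N ↦ ∑ i ∈ Finset.range N, Pi.single (M := fun _ ↦ ℝ) j 1 i • e i) atTop
      (𝓝 (e j)) := by
  refine tendsto_const_nhds.congr' ?_
  filter_upwards [eventually_gt_atTop j] with N hN
  simp [Pi.single_apply, hN]

namespace IsSchauderBasis

theorem ne_zero (he : IsSchauderBasis e) (j : ℕ) : e j ≠ 0 := by
  intro hj
  have hone : Tendsto (fun N ↦ ∑ i ∈ Finset.range N, Pi.single (M := fun _ ↦ ℝ) j 1 i • e i)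
      atTop (𝓝 0) := by simpa [hj] using tendsto_sum_range_single (e := e) j
  have hzero : Tendsto (fun N ↦ ∑ i ∈ Finset.range N, (0 : ℕ → ℝ) i • e i) atTop (𝓝 0) := by
    simp
  simpa using congrFun ((he 0).unique hone hzero) j

theorem bijective_eval_infty (he : IsSchauderBasis e) :
    Function.Bijective fun f : partialSumSpace e ↦ (f : C(OnePoint ℕ, 𝒲)) OnePoint.infty := by
  refine ⟨fun f g (hfg : f.1 OnePoint.infty = g.1 OnePoint.infty) ↦ ?_, fun x ↦ ?_⟩
  · obtain ⟨a, ha⟩ := exists_eq_sum_of_mem_partialSumSpace f.2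
    obtain ⟨b, hb⟩ := exists_eq_sum_of_mem_partialSumSpace g.2
    have hf := (OnePoint.continuous_iff_from_nat _).1 f.1.continuous
    have hg := (OnePoint.continuous_iff_from_nat _).1 g.1.continuous
    simp only [ha, hb] at hf hg
    rw [hfg] at hf
    obtain rfl := (he _).unique hf hg
    refine Subtype.ext (ContinuousMap.ext fun t ↦ ?_)
    induction t using OnePoint.rec with
    | infty => exact hfg
    | coe n => rw [ha, hb]
  · obtain ⟨a, ha, -⟩ := he x
    obtain ⟨f, hf, hfx, -⟩ := exists_mem_partialSumSpace ha
    exact ⟨⟨f, hf⟩, hfx⟩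

-- The open mapping theorem for evaluation at `∞` gives the continuity of the coordinates.
theorem exists_continuous_coord [CompleteSpace 𝒲] (he : IsSchauderBasis e) (n : ℕ) :
    ∃ φ : StrongDual ℝ 𝒲, ∀ (a : ℕ → ℝ) (x : 𝒲),
      Tendsto (fun N ↦ ∑ i ∈ Finset.range N, a i • e i) atTop (𝓝 x) → φ x = a n := by
  have : CompleteSpace (partialSumSpace e) := isClosed_partialSumSpace.completeSpace_coe
  let evalInfty : partialSumSpace e →L[ℝ] 𝒲 :=
    (ContinuousMap.evalCLM ℝ OnePoint.infty).comp (partialSumSpace e).subtypeL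
  let E : partialSumSpace e ≃L[ℝ] 𝒲 := .ofBijective evalInfty
    (LinearMap.ker_eq_bot.2 he.bijective_eval_infty.1)
    (LinearMap.range_eq_top.2 he.bijective_eval_infty.2)
  let increment : partialSumSpace e →L[ℝ] ℝ ∙ e n :=
    ((incrementCLM 𝒲 n).comp (partialSumSpace e).subtypeL).codRestrict _
      fun f ↦ (mem_partialSumSpace.1 f.2).2 n
  refine ⟨(ContinuousLinearEquiv.coord ℝ (e n) (he.ne_zero n)).comp
    (increment.comp (E.symm : 𝒲 →L[ℝ] partialSumSpace e)), fun a x ha ↦ ?_⟩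
  obtain ⟨f, hf, rfl, hfa⟩ := exists_mem_partialSumSpace ha
  have hE : E.symm (f OnePoint.infty) = ⟨f, hf⟩ := E.symm_apply_apply ⟨f, hf⟩
  have hinc : increment ⟨f, hf⟩ = ContinuousLinearEquiv.toSpanNonzeroSingleton ℝ (e n)
      (he.ne_zero n) (a n) := by
    apply Subtype.ext
    change f _ - f _ = a n • e n
    rw [hfa, hfa, Finset.sum_range_succ_sub_sum]
  simp [hE, hinc]

theorem exists_schauderBasis [CompleteSpace 𝒲] (he : IsSchauderBasis e) :
    ∃ b : SchauderBasis ℝ 𝒲, ⇑b = e := by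
  choose φ hφ using he.exists_continuous_coord
  have hortho (i j : ℕ) : φ i (e j) = Pi.single (M := fun _ ↦ ℝ) j 1 i :=
    hφ i _ _ (tendsto_sum_range_single j)
  have hexpansion (x : 𝒲) : HasSum (fun i ↦ φ i x • e i) x (SummationFilter.conditional ℕ) := by
    obtain ⟨a, ha, -⟩ := he x
    rw [HasSum, SummationFilter.conditional_filter_eq_map_range, tendsto_map'_iff]
    simpa only [Function.comp_def, hφ _ a x ha] using ha
  exact ⟨⟨e, φ, fun i j ↦ by simp [hortho, Pi.single_apply], hexpansion⟩, rfl⟩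

end IsSchauderBasis

end PartialSums

theorem exists_seq_of_forall_exists_succ {α : Type*} {P : ℕ → α → Prop} {r : ℕ → α → α → Prop}
    (zero : ∃ a, P 0 a) (succ : ∀ n a, P n a → ∃ b, P (n + 1) b ∧ r n a b) :
    ∃ f : ℕ → α, ∀ n, P n (f n) ∧ r n (f n) (f (n + 1)) := by
  choose! next hnext using succ
  obtain ⟨a, ha⟩ := zero
  let f : ℕ → α := fun n ↦ Nat.rec a next n
  have hP (n : ℕ) : P n (f n) := by
    induction n with
    | zero => exact ha
    | succ n ih => exact (hnext n _ ih).1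
  exact ⟨f, fun n ↦ ⟨hP n, (hnext n _ (hP n)).2⟩⟩

section FinitelySupported

variable {R : Type*} [Ring R] {m n : ℕ} {d : ℕ →₀ R} {z : ℕ → ℕ →₀ R}

/-- The finitely supported vectors whose support lies in `[n, ∞)`. -/
abbrev tailSubmodule (n : ℕ) : Submodule R (ℕ →₀ R) :=
  Finsupp.supported R R (Set.Ici n)

theorem mem_tailSubmodule : d ∈ tailSubmodule n ↔ ∀ i < n, d i = 0 := by
  simp [Finsupp.mem_supported']

theorem mem_tailSubmodule_zero : d ∈ tailSubmodule 0 :=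
  mem_tailSubmodule.2 fun _ hi ↦ absurd hi (Nat.not_lt_zero _)

theorem tailSubmodule_anti (h : m ≤ n) : (tailSubmodule n : Submodule R _) ≤ tailSubmodule m :=
  Finsupp.supported_mono (Set.Ici_subset_Ici.2 h)

theorem single_mem_tailSubmodule (n : ℕ) (r : R) : Finsupp.single n r ∈ tailSubmodule n :=
  Finsupp.single_mem_supported R r Set.self_mem_Ici

/-- The least `n` such that `d` is supported in `[0, n)`. -/
def suppEnd (d : ℕ →₀ R) : ℕ := d.support.sup Nat.succ

theorem suppEnd_le_iff : suppEnd d ≤ n ↔ d ∈ Finsupp.supported R R (Set.Iio n) := by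
  simp [suppEnd, Finsupp.mem_supported, Set.subset_def, Finset.sup_le_iff]

theorem suppEnd_le_iff_support_subset : suppEnd d ≤ n ↔ d.support ⊆ Finset.range n := by
  simp [suppEnd, Finset.subset_iff, Finset.sup_le_iff]

theorem eq_zero_of_suppEnd_le (hd : d ∈ tailSubmodule n) (h : suppEnd d ≤ n) : d = 0 :=
  Submodule.disjoint_def.1 (Finsupp.disjoint_supported_supported
    (Set.Ici_disjoint_Iio le_rfl)) d hd (suppEnd_le_iff.1 h)

theorem lt_suppEnd (hd : d ∈ tailSubmodule n) (h0 : d ≠ 0) : n < suppEnd d :=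
  not_le.1 fun h ↦ h0 (eq_zero_of_suppEnd_le hd h)

/-- Subspaces containing nonzero vectors supported arbitrarily far out: exactly those which
contain a block sequence. -/
def MeetsTails (M : Submodule R (ℕ →₀ R)) : Prop :=
  ∀ n, ∃ d ∈ M, d ∈ tailSubmodule n ∧ d ≠ 0

theorem meetsTails_top [Nontrivial R] : MeetsTails (⊤ : Submodule R (ℕ →₀ R)) := fun n ↦
  ⟨Finsupp.single n 1, trivial, single_mem_tailSubmodule n 1, by simp⟩

theorem MeetsTails.inf_tailSubmodule {M : Submodule R (ℕ →₀ R)} (h : MeetsTails M) (n : ℕ) :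
    MeetsTails (M ⊓ tailSubmodule n) := fun k ↦ by
  obtain ⟨d, hdM, hd, h0⟩ := h (max n k)
  exact ⟨d, ⟨hdM, tailSubmodule_anti (le_max_left _ _) hd⟩,
    tailSubmodule_anti (le_max_right _ _) hd, h0⟩

/-- Sequences of nonzero finitely supported vectors with successive supports. -/
structure IsBlock (z : ℕ → ℕ →₀ R) : Prop where
  ne_zero : ∀ k, z k ≠ 0
  succ_mem : ∀ k, z (k + 1) ∈ tailSubmodule (suppEnd (z k))

namespace IsBlock

theorem strictMono_suppEnd (hz : IsBlock z) : StrictMono fun k ↦ suppEnd (z k) :=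
  strictMono_nat_of_lt_succ fun k ↦ lt_suppEnd (hz.succ_mem k) (hz.ne_zero _)

theorem mem_of_lt (hz : IsBlock z) {j k : ℕ} (h : j < k) :
    z k ∈ tailSubmodule (suppEnd (z j)) := by
  obtain ⟨k, rfl⟩ := Nat.exists_eq_succ_of_ne_zero h.ne_bot
  exact tailSubmodule_anti (hz.strictMono_suppEnd.monotone (Nat.lt_succ_iff.1 h)) (hz.succ_mem k)

theorem mem_tailSubmodule (hz : IsBlock z) (k : ℕ) : z k ∈ tailSubmodule k := by
  induction k with
  | zero => exact mem_tailSubmodule_zero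
  | succ k ih =>
    exact tailSubmodule_anti (lt_suppEnd ih (hz.ne_zero k)) (hz.succ_mem k)

theorem meetsTails (hz : IsBlock z) : MeetsTails (Submodule.span R (Set.range z)) := fun n ↦
  ⟨z n, Submodule.subset_span ⟨n, rfl⟩, hz.mem_tailSubmodule n, hz.ne_zero n⟩

theorem span_image_Iic_le (hz : IsBlock z) (j : ℕ) :
    Submodule.span R (z '' Set.Iic j) ≤ Finsupp.supported R R (Set.Iio (suppEnd (z j))) := by
  rw [Submodule.span_le]
  rintro _ ⟨i, hi, rfl⟩
  exact suppEnd_le_iff.1 (hz.strictMono_suppEnd.monotone hi)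

theorem span_image_Ioi_le (hz : IsBlock z) (j : ℕ) :
    Submodule.span R (z '' Set.Ioi j) ≤ tailSubmodule (suppEnd (z j)) := by
  rw [Submodule.span_le]
  rintro _ ⟨i, hi, rfl⟩
  exact hz.mem_of_lt hi

theorem exists_add_eq_of_mem_span (j : ℕ) (hd : d ∈ Submodule.span R (Set.range z)) :
    ∃ d₁ ∈ Submodule.span R (z '' Set.Iic j), ∃ d₂ ∈ Submodule.span R (z '' Set.Ioi j),
      d₁ + d₂ = d := by
  rwa [← Set.image_univ, ← Set.Iic_union_Ioi (a := j), Set.image_union, Submodule.span_union,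
    Submodule.mem_sup] at hd

theorem mem_span_image_Ioi (hz : IsBlock z) {j : ℕ} (hd : d ∈ Submodule.span R (Set.range z))
    (hj : d ∈ tailSubmodule (suppEnd (z j))) : d ∈ Submodule.span R (z '' Set.Ioi j) := by
  obtain ⟨d₁, hd₁, d₂, hd₂, rfl⟩ := exists_add_eq_of_mem_span j hd
  have h₁ : d₁ ∈ tailSubmodule (suppEnd (z j)) :=
    (Submodule.add_mem_iff_left _ (hz.span_image_Ioi_le j hd₂)).1 hj
  rwa [eq_zero_of_suppEnd_le h₁ (suppEnd_le_iff.2 (hz.span_image_Iic_le j hd₁)), zero_add]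

end IsBlock

theorem exists_isBlock_forall {p : ℕ → (ℕ →₀ R) → Prop}
    (hp : ∀ k n, ∃ d ∈ tailSubmodule n, d ≠ 0 ∧ p k d) :
    ∃ z : ℕ → ℕ →₀ R, IsBlock z ∧ ∀ k, p k (z k) := by
  obtain ⟨z, hz⟩ := exists_seq_of_forall_exists_succ
    (P := fun k d ↦ d ≠ 0 ∧ p k d) (r := fun _ d d' ↦ d' ∈ tailSubmodule (suppEnd d))
    ((hp 0 0).imp fun _ h ↦ h.2) fun n d _ ↦ (hp (n + 1) (suppEnd d)).imp fun _ h ↦ ⟨h.2, h.1⟩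
  exact ⟨z, ⟨fun k ↦ (hz k).1.1, fun k ↦ (hz k).2⟩, fun k ↦ (hz k).1.2⟩

theorem MeetsTails.exists_isBlock {M : ℕ → Submodule R (ℕ →₀ R)} (hM : ∀ k, MeetsTails (M k)) :
    ∃ z : ℕ → ℕ →₀ R, IsBlock z ∧ ∀ k, z k ∈ M k :=
  exists_isBlock_forall fun k n ↦
    let ⟨d, hdM, hd, h0⟩ := hM k n
    ⟨d, hd, h0, hdM⟩

theorem MeetsTails.exists_forall_of_countable {σ : Type*} [Countable σ]
    {X : Submodule R (ℕ →₀ R)} (hX : MeetsTails X) {Q : σ → Submodule R (ℕ →₀ R) → Prop}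
    (hereditary : ∀ k M M', (∃ n, M' ⊓ tailSubmodule n ≤ M) → Q k M → Q k M')
    (dense : ∀ k, ∀ M ≤ X, MeetsTails M → ∃ M' ≤ M, MeetsTails M' ∧ Q k M') :
    ∃ X' ≤ X, MeetsTails X' ∧ ∀ k, Q k X' := by
  rcases isEmpty_or_nonempty σ with hσ | hσ
  · exact ⟨X, le_rfl, hX, isEmptyElim⟩
  obtain ⟨s, hs⟩ := exists_surjective_nat σ
  obtain ⟨M, hM⟩ := exists_seq_of_forall_exists_succ
    (P := fun _ M ↦ M ≤ X ∧ MeetsTails M) (r := fun k M M' ↦ M' ≤ M ∧ Q (s k) M')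
    ⟨X, le_rfl, hX⟩ fun k M hM ↦
      let ⟨M', hle, hM', hQ⟩ := dense (s k) M hM.1 hM.2
      ⟨M', ⟨hle.trans hM.1, hM'⟩, hle, hQ⟩
  have hanti : Antitone M := antitone_nat_of_succ_le fun k ↦ (hM k).2.1
  obtain ⟨z, hz, hzM⟩ := MeetsTails.exists_isBlock fun k ↦ (hM k).1.2
  refine ⟨Submodule.span R (Set.range z), ?_, hz.meetsTails, fun t ↦ ?_⟩
  · rw [Submodule.span_le]
    rintro _ ⟨k, rfl⟩
    exact (hM k).1.1 (hzM k)
  · obtain ⟨k, rfl⟩ := hs t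
    refine hereditary _ (M (k + 1)) _ ⟨suppEnd (z k), ?_⟩ (hM k).2.2
    rintro d ⟨hdz, hd⟩
    refine Submodule.span_le.2 ?_ (hz.mem_span_image_Ioi hdz hd)
    rintro _ ⟨j, hj, rfl⟩
    exact hanti (Nat.succ_le_iff.2 hj) (hzM j)

end FinitelySupported

section BlockedSequences

variable {𝕜 E : Type*} [NontriviallyNormedField 𝕜] [NormedAddCommGroup E] [NormedSpace 𝕜 E]
  {b : SchauderBasis 𝕜 E} {y v : ℕ → E} {m : ℕ → ℕ} {n : ℕ}

/-- `y k` is supported in `[m k, m (k + 1))` with respect to the basis `b`, for all `k`; expressed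
through the projections of `b`. -/
def IsBlockedBy (b : SchauderBasis 𝕜 E) (y : ℕ → E) (m : ℕ → ℕ) : Prop :=
  ∀ k j, b.proj (m k) (y j) = if j < k then y j else 0

namespace IsBlockedBy

theorem of_mem_span_image_Ico {z : ℕ → E} {N : ℕ → ℕ} (h : IsBlockedBy b y m) (hN : Monotone N)
    (hz : ∀ k, z k ∈ Submodule.span 𝕜 (y '' Set.Ico (N k) (N (k + 1)))) :
    IsBlockedBy b z (m ∘ N) := fun k j ↦ by
  simp only [Function.comp_apply]
  split_ifs with hjk
  · refine LinearMap.eqOn_span (f := (b.proj (m (N k)) : E →ₗ[𝕜] E)) (g := LinearMap.id) ?_ (hz j)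
    rintro _ ⟨i, hi, rfl⟩
    exact (h _ _).trans (if_pos (hi.2.trans_le (hN hjk)))
  · refine LinearMap.eqOn_span (f := (b.proj (m (N k)) : E →ₗ[𝕜] E)) (g := 0) ?_ (hz j)
    rintro _ ⟨i, hi, rfl⟩
    exact (h _ _).trans (if_neg ((hN (not_lt.1 hjk)).trans hi.1).not_gt)

theorem proj_sum (h : IsBlockedBy b y m) (a : ℕ → 𝕜) {k : ℕ} (hk : k ≤ n) :
    b.proj (m k) (∑ i ∈ Finset.range n, a i • y i) = ∑ i ∈ Finset.range k, a i • y i := by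
  simp only [map_sum, map_smul, h k, smul_ite, smul_zero, ← Finset.sum_filter]
  congr 1
  grind

theorem linearIndependent (h : IsBlockedBy b y m) (hy : ∀ k, y k ≠ 0) :
    LinearIndependent 𝕜 y := by
  refine linearIndependent_iff.2 fun l hl ↦ Finsupp.ext fun k ↦ ?_
  rw [Finsupp.linearCombination_apply, Finsupp.sum_of_support_subset
    (s := Finset.range (max (k + 1) (suppEnd l))) _ ?_ _ (by simp)] at hl
  · have hsucc := h.proj_sum l (le_max_left (k + 1) (suppEnd l))
    have hself := h.proj_sum l ((Nat.le_succ k).trans (le_max_left (k + 1) (suppEnd l)))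
    rw [hl, map_zero] at hself hsucc
    rw [Finset.sum_range_succ, ← hself, zero_add] at hsucc
    exact (smul_eq_zero.1 hsucc.symm).resolve_right (hy k)
  · exact suppEnd_le_iff_support_subset.1 (le_max_right _ _)

variable [CompleteSpace E]

theorem norm_smul_le (h : IsBlockedBy b y m) (a : ℕ → 𝕜) {k : ℕ} (hk : k < n) :
    ‖a k • y k‖ ≤ 2 * b.nnnormProjBound * ‖∑ i ∈ Finset.range n, a i • y i‖ := by
  set w := ∑ i ∈ Finset.range n, a i • y i
  have hproj (j : ℕ) : ‖b.proj j w‖ ≤ b.nnnormProjBound * ‖w‖ :=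
    (b.proj j).le_of_opNorm_le (b.norm_proj_le_nnnormProjBound j) w
  calc ‖a k • y k‖ = ‖b.proj (m (k + 1)) w - b.proj (m k) w‖ := by
        rw [h.proj_sum a hk, h.proj_sum a hk.le, Finset.sum_range_succ_sub_sum]
    _ ≤ b.nnnormProjBound * ‖w‖ + b.nnnormProjBound * ‖w‖ :=
        norm_sub_le_of_le (hproj _) (hproj _)
    _ = 2 * b.nnnormProjBound * ‖w‖ := by ring

theorem norm_sum_le (h : IsBlockedBy b y m) {ε : ℕ → ℝ} (hε : ∀ k, 0 ≤ ε k)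
    (hv : ∀ k, ‖v k‖ ≤ ε k * ‖y k‖) (a : ℕ → 𝕜) :
    ‖∑ i ∈ Finset.range n, a i • v i‖ ≤ (∑ i ∈ Finset.range n, ε i) *
      (2 * b.nnnormProjBound * ‖∑ i ∈ Finset.range n, a i • y i‖) := by
  rw [Finset.sum_mul]
  refine norm_sum_le_of_le _ fun i hi ↦ ?_
  calc ‖a i • v i‖ = ‖a i‖ * ‖v i‖ := norm_smul _ _
    _ ≤ ‖a i‖ * (ε i * ‖y i‖) := by gcongr; exact hv i
    _ = ε i * ‖a i • y i‖ := by rw [norm_smul]; ring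
    _ ≤ _ := mul_le_mul_of_nonneg_left (h.norm_smul_le a (Finset.mem_range.1 hi)) (hε i)

theorem exists_norm_sum_le (h : IsBlockedBy b y m) (hy : ∀ k, y k ≠ 0) (v : ℕ → E) (n : ℕ) :
    ∃ C : ℝ, 0 ≤ C ∧ ∀ a : ℕ → 𝕜, ‖∑ i ∈ Finset.range n, a i • v i‖ ≤
      C * ‖∑ i ∈ Finset.range n, a i • y i‖ := by
  refine ⟨(∑ i ∈ Finset.range n, ‖v i‖ / ‖y i‖) * (2 * b.nnnormProjBound), by positivity,
    fun a ↦ ?_⟩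
  rw [mul_assoc]
  exact h.norm_sum_le (ε := fun i ↦ ‖v i‖ / ‖y i‖) (fun k ↦ by positivity)
    (fun k ↦ (div_mul_cancel₀ _ (norm_ne_zero_iff.2 (hy k))).ge) a

end IsBlockedBy

/-- The relative error allowed on the `k`-th vector of a blocked sequence for the total relative
error on linear combinations to stay below `η`. -/
noncomputable def blockTolerance (b : SchauderBasis 𝕜 E) (η : ℝ) (k : ℕ) : ℝ :=
  η / (4 * b.nnnormProjBound + 1) * (1 / 2) ^ k

theorem blockTolerance_pos (b : SchauderBasis 𝕜 E) {η : ℝ} (hη : 0 < η) (k : ℕ) :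
    0 < blockTolerance b η k := by
  unfold blockTolerance
  positivity

theorem IsBlockedBy.norm_sum_le_of_le_blockTolerance [CompleteSpace E] (h : IsBlockedBy b y m)
    {η : ℝ} (hη : 0 < η) (hv : ∀ k, ‖v k‖ ≤ blockTolerance b η k * ‖y k‖) (a : ℕ → 𝕜) (n : ℕ) :
    ‖∑ i ∈ Finset.range n, a i • v i‖ ≤ η * ‖∑ i ∈ Finset.range n, a i • y i‖ := by
  have hsum : (∑ i ∈ Finset.range n, blockTolerance b η i) * (2 * b.nnnormProjBound) ≤ η := by
    simp only [blockTolerance, ← Finset.mul_sum]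
    calc _ ≤ η / (4 * b.nnnormProjBound + 1) * 2 * (2 * b.nnnormProjBound) := by
          gcongr; exact sum_geometric_two_le n
      _ = η * (4 * b.nnnormProjBound / (4 * b.nnnormProjBound + 1)) := by ring
      _ ≤ η * 1 := by gcongr; exact div_le_one_of_le₀ (by linarith) (by positivity)
      _ = η := mul_one η
  refine (h.norm_sum_le (fun k ↦ (blockTolerance_pos b hη k).le) hv a).trans ?_
  rw [← mul_assoc]
  gcongr

end BlockedSequences

section RationalCombinations

variable {V E : Type*} [AddCommGroup V] [Module ℚ V] [NormedAddCommGroup E] [NormedSpace ℝ E]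

theorem map_mem_span_image_of_mem_span (f : V →ₛₗ[Rat.castHom ℝ] E) {S : Set V} {d : V}
    (hd : d ∈ Submodule.span ℚ S) : f d ∈ Submodule.span ℝ (f '' S) := by
  induction hd using Submodule.span_induction with
  | mem x hx => exact Submodule.subset_span ⟨x, hx, rfl⟩
  | zero => simp
  | add x y _ _ hx hy => rw [map_add]; exact Submodule.add_mem _ hx hy
  | smul r x _ hx => rw [map_smulₛₗ]; exact Submodule.smul_mem _ _ hx

theorem span_image_le_closure_image_span (f : V →ₛₗ[Rat.castHom ℝ] E) (S : Set V) :
    (Submodule.span ℝ (f '' S) : Set E) ⊆ closure (f '' Submodule.span ℚ S) := by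
  intro v hv
  induction hv using Submodule.span_induction with
  | mem x hx => exact subset_closure (Set.image_mono Submodule.subset_span hx)
  | zero => exact subset_closure ⟨0, Submodule.zero_mem _, map_zero f⟩
  | add x y _ _ hx hy =>
    refine map_mem_closure₂ continuous_add hx hy ?_
    rintro _ ⟨c, hc, rfl⟩ _ ⟨d, hd, rfl⟩
    exact ⟨c + d, Submodule.add_mem _ hc hd, map_add f c d⟩
  | smul r x _ hx =>
    refine map_mem_closure₂ continuous_smul (Rat.denseRange_cast r) hx ?_
    rintro _ ⟨q, rfl⟩ _ ⟨d, hd, rfl⟩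
    exact ⟨q • d, Submodule.smul_mem _ _ hd, map_smulₛₗ f q d⟩

/-- The vector `∑ d i • e i` of a sequence of rational coefficients `d`. -/
noncomputable def ratCombination (e : ℕ → E) : (ℕ →₀ ℚ) →ₛₗ[Rat.castHom ℝ] E where
  toFun d := d.sum fun i q ↦ (q : ℝ) • e i
  map_add' c d := Finsupp.sum_add_index' (by simp) (by simp [add_smul])
  map_smul' q d := by
    rw [Finsupp.sum_smul_index' (by simp), Finsupp.smul_sum]
    simp [mul_smul]

theorem ratCombination_apply (e : ℕ → E) (d : ℕ →₀ ℚ) :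
    ratCombination e d = d.sum fun i q ↦ (q : ℝ) • e i :=
  rfl

/-- `ratCombination` in both components: it maps a set of pairs of rational vectors to a set of
pairs of vectors, such as the graph of an operator. -/
noncomputable def ratCombinationProd (e : ℕ → E) :
    (ℕ →₀ ℚ) × (ℕ →₀ ℚ) →ₛₗ[Rat.castHom ℝ] E × E where
  toFun := Prod.map (ratCombination e) (ratCombination e)
  map_add' _ _ := Prod.ext (map_add _ _ _) (map_add _ _ _)
  map_smul' _ _ := Prod.ext (map_smulₛₗ _ _ _) (map_smulₛₗ _ _ _)

end RationalCombinations

section RationalBlocks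

variable {E : Type*} [NormedAddCommGroup E] [NormedSpace ℝ E] (b : SchauderBasis ℝ E)
  {d : ℕ →₀ ℚ} {z : ℕ → ℕ →₀ ℚ} {n : ℕ}

theorem coord_ratCombination (i : ℕ) (d : ℕ →₀ ℚ) : b.coord i (ratCombination b d) = d i := by
  rw [ratCombination_apply, map_finsuppSum]
  simp +contextual [b.ortho, Pi.single_apply]

theorem ratCombination_injective : Function.Injective (ratCombination b) := fun c d h ↦
  Finsupp.ext fun i ↦ by
    simpa only [coord_ratCombination, Rat.cast_inj] using congrArg (b.coord i) h

theorem proj_ratCombination_eq_zero (h : d ∈ tailSubmodule n) :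
    b.proj n (ratCombination b d) = 0 := by
  rw [b.proj_apply]
  refine Finset.sum_eq_zero fun i hi ↦ ?_
  simp [coord_ratCombination, mem_tailSubmodule.1 h i (Finset.mem_range.1 hi)]

theorem proj_ratCombination_eq_self (h : suppEnd d ≤ n) :
    b.proj n (ratCombination b d) = ratCombination b d := by
  simp only [b.proj_apply, coord_ratCombination]
  rw [ratCombination_apply, Finsupp.sum_of_support_subset (s := Finset.range n)]
  · exact suppEnd_le_iff_support_subset.1 h
  · simp

/-- The successive ends of the supports of `z`, preceded by `0`. -/
def blockBoundary (z : ℕ → ℕ →₀ ℚ) : ℕ → ℕ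
  | 0 => 0
  | k + 1 => suppEnd (z k)

theorem IsBlock.isBlockedBy (hz : IsBlock z) :
    IsBlockedBy b (fun k ↦ ratCombination b (z k)) (blockBoundary z)
  | 0, j => by simp [blockBoundary]
  | k + 1, j => by
    rw [blockBoundary]
    split_ifs with h
    · exact proj_ratCombination_eq_self b (hz.strictMono_suppEnd.monotone (Nat.lt_succ_iff.1 h))
    · exact proj_ratCombination_eq_zero b (hz.mem_of_lt (by lia))

theorem IsBlock.ratCombination_ne_zero (hz : IsBlock z) (k : ℕ) : ratCombination b (z k) ≠ 0 :=
  (map_ne_zero_iff _ (ratCombination_injective b)).2 (hz.ne_zero k)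

end RationalBlocks

section ClosedSpan

variable {E : Type} [NormedAddCommGroup E] [NormedSpace ℝ E] {V : Type*} [AddCommGroup V]
  [Module ℚ V]

theorem exists_mem_span_norm_sub_lt (f : V →ₛₗ[Rat.castHom ℝ] E) {S : Set V} {v : E}
    (hv : v ∈ closedSpan (f '' S)) {δ : ℝ} (hδ : 0 < δ) :
    ∃ d ∈ Submodule.span ℚ S, ‖v - f d‖ < δ := by
  have hv' : v ∈ closure (f '' Submodule.span ℚ S) :=
    closure_minimal (span_image_le_closure_image_span f S) isClosed_closure hv
  obtain ⟨_, ⟨d, hd, rfl⟩, hdv⟩ := Metric.mem_closure_iff.1 hv' δ hδ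
  exact ⟨d, hd, by rwa [← dist_eq_norm]⟩

end ClosedSpan

section IsoGraph

variable {E F : Type*} [SeminormedAddCommGroup E] [SeminormedAddCommGroup F] {C C' : ℝ}
  {R R' : Set (E × F)}

/-- The relation `R` distorts norms at most by the factor `C` in both directions. A subspace with
this property is the graph of an isomorphism between subspaces of `E` and `F`. -/
def IsIsoGraph (C : ℝ) (R : Set (E × F)) : Prop :=
  ∀ w ∈ R, ‖w.1‖ ≤ C * ‖w.2‖ ∧ ‖w.2‖ ≤ C * ‖w.1‖

namespace IsIsoGraph

theorem mono (h : IsIsoGraph C R) (hR : R' ⊆ R) : IsIsoGraph C R' := fun w hw ↦ h w (hR hw)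

theorem mono_const (h : IsIsoGraph C R) (hC : C ≤ C') : IsIsoGraph C' R := fun w hw ↦
  ⟨(h w hw).1.trans (by gcongr), (h w hw).2.trans (by gcongr)⟩

theorem closure (h : IsIsoGraph C R) : IsIsoGraph C (closure R) := by
  have hclosed : IsClosed {w : E × F | ‖w.1‖ ≤ C * ‖w.2‖ ∧ ‖w.2‖ ≤ C * ‖w.1‖} := by
    refine IsClosed.and ?_ ?_ <;> exact isClosed_le (by fun_prop) (by fun_prop)
  exact closure_minimal h hclosed

end IsIsoGraph

end IsoGraph

section ClosedIsoGraph

variable {E F : Type*} [NormedAddCommGroup E] [NormedSpace ℝ E] [CompleteSpace E]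
  [NormedAddCommGroup F] [NormedSpace ℝ F] [CompleteSpace F] {C : ℝ} {R : Submodule ℝ (E × F)}

theorem IsIsoGraph.isClosed_map_fst (hR : IsIsoGraph C (R : Set (E × F)))
    (hRc : IsClosed (R : Set (E × F))) : IsClosed (R.map (LinearMap.fst ℝ E F) : Set E) := by
  have : CompleteSpace R := hRc.completeSpace_coe
  let f : R →L[ℝ] E := (ContinuousLinearMap.fst ℝ E F).comp R.subtypeL
  have hf : AntilipschitzWith (max 1 C).toNNReal f := by
    refine AddMonoidHomClass.antilipschitz_of_bound f fun w ↦ ?_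
    rw [Real.coe_toNNReal _ (by positivity)]
    change max ‖w.1.1‖ ‖w.1.2‖ ≤ max 1 C * ‖w.1.1‖
    refine max_le (le_mul_of_one_le_left (norm_nonneg _) (le_max_left _ _)) ?_
    exact (hR w w.2).2.trans (by gcongr; exact le_max_right _ _)
  have hrange : (R.map (LinearMap.fst ℝ E F) : Set E) = Set.range f := by
    ext; simp [f]
  exact hrange ▸ hf.isClosed_range f.uniformContinuous

end ClosedIsoGraph

section LinIsoEmbeds

variable {𝒲 : Type} [NormedAddCommGroup 𝒲] [NormedSpace ℝ 𝒲] {C : ℝ}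

theorem IsIsoGraph.linIsoEmbeds {R : Submodule ℝ (𝒲 × 𝒲)} (hC : 0 < C)
    (hR : IsIsoGraph C (R : Set (𝒲 × 𝒲))) {U V : Submodule ℝ 𝒲}
    (hU : U ≤ R.map (LinearMap.fst ℝ 𝒲 𝒲)) (hV : R.map (LinearMap.snd ℝ 𝒲 𝒲) ≤ V) :
    LinIsoEmbeds U V := by
  have hgraph : R.toLinearPMap.graph = R := R.toLinearPMap_graph_eq fun w hw h0 ↦ by
    simpa [h0] using (hR w hw).2
  let T : U →ₗ[ℝ] 𝒲 := R.toLinearPMap.toFun.comp (Submodule.inclusion hU)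
  have hT (u : U) : ((u : 𝒲), T u) ∈ R := by
    have := R.toLinearPMap.mem_graph (Submodule.inclusion hU u)
    rwa [hgraph] at this
  refine ⟨T, fun u ↦ hV ⟨_, hT u, rfl⟩, C⁻¹, C, inv_pos.2 hC, fun u ↦ ⟨?_, (hR _ (hT u)).2⟩⟩
  exact (inv_mul_le_iff₀ hC).2 (hR _ (hT u)).1

theorem IsIsoGraph.linIsoEmbeds_closedSpan [CompleteSpace 𝒲] {R : Submodule ℝ (𝒲 × 𝒲)}
    (hR : IsIsoGraph C (R : Set (𝒲 × 𝒲))) {S : Set 𝒲} {V : Submodule ℝ 𝒲}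
    (hV : IsClosed (V : Set 𝒲)) (hS : ∀ s ∈ S, ∃ v ∈ V, (s, v) ∈ R) :
    LinIsoEmbeds (closedSpan S) V := by
  let R₁ : Submodule ℝ (𝒲 × 𝒲) := (R ⊓ (⊤ : Submodule ℝ 𝒲).prod V).topologicalClosure
  have hR₁ : IsIsoGraph (max C 1) (R₁ : Set (𝒲 × 𝒲)) :=
    ((hR.mono inf_le_left).mono_const (le_max_left C 1)).closure
  have hR₁V : R₁ ≤ (⊤ : Submodule ℝ 𝒲).prod V := by
    refine Submodule.topologicalClosure_minimal _ inf_le_right ?_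
    rw [Submodule.prod_coe]
    exact isClosed_univ.prod hV
  refine hR₁.linIsoEmbeds (by positivity) ?_
    (Submodule.map_le_iff_le_comap.2 fun w hw ↦ (hR₁V hw).2)
  refine Submodule.topologicalClosure_minimal _ (Submodule.span_le.2 fun s hs ↦ ?_)
    (hR₁.isClosed_map_fst (Submodule.isClosed_topologicalClosure _))
  obtain ⟨v, hv, hsv⟩ := hS s hs
  exact ⟨(s, v), Submodule.le_topologicalClosure _ ⟨hsv, trivial, hv⟩, rfl⟩

theorem LinIsoEmbeds.trans {X Y Z : Submodule ℝ 𝒲} (hXY : LinIsoEmbeds X Y)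
    (hYZ : LinIsoEmbeds Y Z) : LinIsoEmbeds X Z := by
  obtain ⟨T, hT, c, C, hc, hTb⟩ := hXY
  obtain ⟨S, hS, d, D, hd, hSb⟩ := hYZ
  let T' : X →ₗ[ℝ] Y := T.codRestrict Y hT
  have hT' (v : X) : ‖T' v‖ = ‖T v‖ := rfl
  refine ⟨S.comp T', fun v ↦ hS _, d * c, |D| * C, by positivity, fun v ↦ ⟨?_, ?_⟩⟩
  · calc d * c * ‖v‖ = d * (c * ‖v‖) := mul_assoc _ _ _
      _ ≤ d * ‖T' v‖ := by rw [hT']; gcongr; exact (hTb v).1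
      _ ≤ ‖S (T' v)‖ := (hSb _).1
  · calc ‖S (T' v)‖ ≤ D * ‖T' v‖ := (hSb _).2
      _ ≤ |D| * (C * ‖v‖) := by rw [hT']; gcongr; exacts [le_abs_self D, (hTb v).2]
      _ = |D| * C * ‖v‖ := (mul_assoc _ _ _).symm

end LinIsoEmbeds

section ExchangeFinitelyMany

variable {E : Type*} [NormedAddCommGroup E] [NormedSpace ℝ E] [CompleteSpace E]
  {b : SchauderBasis ℝ E} {g : ℕ → E} {m : ℕ → ℕ}

theorem IsBlockedBy.exists_norm_sum_add_le (hg : IsBlockedBy b g m) (hg0 : ∀ k, g k ≠ 0)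
    (h : ℕ → E) (N : ℕ) :
    ∃ C : ℝ, ∀ (a : ℕ → ℝ) (s : E), b.proj (m N) s = 0 →
      ‖∑ i ∈ Finset.range N, a i • h i + s‖ ≤ C * ‖∑ i ∈ Finset.range N, a i • g i + s‖ := by
  obtain ⟨C, hC0, hC⟩ := hg.exists_norm_sum_le hg0 h N
  set K : ℝ := b.nnnormProjBound.toReal
  refine ⟨C * K + (1 + K), fun a s hs ↦ ?_⟩
  set u := ∑ i ∈ Finset.range N, a i • g i with hu
  have hproj : b.proj (m N) (u + s) = u := by rw [map_add, hs, add_zero, hu, hg.proj_sum a le_rfl]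
  have hule : ‖u‖ ≤ K * ‖u + s‖ := by
    simpa only [hproj] using
      (b.proj (m N)).le_of_opNorm_le (b.norm_proj_le_nnnormProjBound _) (u + s)
  calc _ ≤ ‖∑ i ∈ Finset.range N, a i • h i‖ + ‖s‖ := norm_add_le _ _
    _ ≤ C * ‖u‖ + (‖u + s‖ + ‖u‖) := by
        gcongr
        · exact hC a
        · simpa using norm_sub_le (u + s) u
    _ ≤ C * (K * ‖u + s‖) + (‖u + s‖ + K * ‖u + s‖) := by gcongr
    _ = (C * K + (1 + K)) * ‖u + s‖ := by ring

end ExchangeFinitelyMany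

section ExchangeFinitelyManyClosedSpan

variable {𝒲 : Type} [NormedAddCommGroup 𝒲] [NormedSpace ℝ 𝒲] [CompleteSpace 𝒲]
  {b : SchauderBasis ℝ 𝒲} {g h : ℕ → 𝒲} {m m' : ℕ → ℕ}

theorem IsBlockedBy.linIsoEmbeds_exchange (hg : IsBlockedBy b g m) (hh : IsBlockedBy b h m')
    (hg0 : ∀ k, g k ≠ 0) (hh0 : ∀ k, h k ≠ 0) (N : ℕ) {S : Set 𝒲}
    (hS : ∀ s ∈ S, b.proj (m N) s = 0 ∧ b.proj (m' N) s = 0) :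
    LinIsoEmbeds (closedSpan (g '' Set.Iio N ∪ S)) (closedSpan (h '' Set.Iio N ∪ S)) := by
  obtain ⟨C, hC⟩ := hg.exists_norm_sum_add_le hg0 h N
  obtain ⟨C', hC'⟩ := hh.exists_norm_sum_add_le hh0 g N
  let f : ℕ → 𝒲 × 𝒲 := fun i ↦ (g i, h i)
  let R : Submodule ℝ (𝒲 × 𝒲) := Submodule.span ℝ (f '' Set.Iio N) ⊔
    (Submodule.span ℝ S).map (LinearMap.id.prod LinearMap.id)
  have hker : Submodule.span ℝ S ≤
      (b.proj (m N)).toLinearMap.ker ⊓ (b.proj (m' N)).toLinearMap.ker :=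
    Submodule.span_le.2 hS
  have hR : IsIsoGraph (max C C') (R : Set (𝒲 × 𝒲)) := by
    intro w hw
    obtain ⟨p, hp, _, ⟨s, hs, rfl⟩, rfl⟩ := Submodule.mem_sup.1 hw
    rw [← Finset.coe_Iio, Submodule.mem_span_image_finset_iff_exists_fun'] at hp
    obtain ⟨a, rfl⟩ := hp
    simp only [Prod.fst_add, Prod.snd_add, Prod.fst_sum, Prod.snd_sum, f, Nat.Iio_eq_range,
      Prod.smul_mk, LinearMap.prod_apply, Function.prod, LinearMap.id_apply]
    refine ⟨(hC' a s (hker hs).2).trans ?_, (hC a s (hker hs).1).trans ?_⟩ <;> gcongr <;> simp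
  refine hR.linIsoEmbeds_closedSpan (Submodule.isClosed_topologicalClosure _) ?_
  rintro s (⟨i, hi, rfl⟩ | hs)
  · exact ⟨h i, Submodule.le_topologicalClosure _ (Submodule.subset_span (.inl ⟨i, hi, rfl⟩)),
      Submodule.mem_sup_left (Submodule.subset_span ⟨i, hi, rfl⟩)⟩
  · exact ⟨s, Submodule.le_topologicalClosure _ (Submodule.subset_span (.inr hs)),
      Submodule.mem_sup_right ⟨s, Submodule.subset_span hs, rfl⟩⟩

end ExchangeFinitelyManyClosedSpan

section SeqEquiv

variable {𝒲 : Type} [NormedAddCommGroup 𝒲] [NormedSpace ℝ 𝒲] {K K' : ℝ} {n : ℕ} {x y v : ℕ → 𝒲}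

theorem seqEquiv_two_of_norm_sub_le (h : ∀ a : ℕ → ℝ,
      ‖∑ i ∈ Finset.range n, a i • x i - ∑ i ∈ Finset.range n, a i • y i‖ ≤
        1 / 2 * ‖∑ i ∈ Finset.range n, a i • x i‖) :
    SeqEquiv 2 n x y := by
  intro a
  have hx := norm_sub_norm_le (∑ i ∈ Finset.range n, a i • x i) (∑ i ∈ Finset.range n, a i • y i)
  have hy := norm_sub_norm_le (∑ i ∈ Finset.range n, a i • y i) (∑ i ∈ Finset.range n, a i • x i)
  rw [norm_sub_rev] at hy
  have hnonneg := norm_nonneg (∑ i ∈ Finset.range n, a i • x i)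
  constructor <;> linarith [h a]

namespace SeqEquiv

theorem symm (hK : 0 < K) (h : SeqEquiv K n x y) : SeqEquiv K n y x := fun a ↦
  ⟨by rw [one_div, inv_mul_le_iff₀ hK]; exact (h a).2,
    by rw [← inv_mul_le_iff₀ hK, ← one_div]; exact (h a).1⟩

theorem trans (hK' : 0 ≤ K') (hxy : SeqEquiv K n x y) (hyv : SeqEquiv K' n y v) :
    SeqEquiv (K' * K) n x v := fun a ↦ by
  constructor
  · calc _ = 1 / K' * (1 / K * ‖∑ i ∈ Finset.range n, a i • x i‖) := by ring
      _ ≤ 1 / K' * ‖∑ i ∈ Finset.range n, a i • y i‖ := by gcongr; exact (hxy a).1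
      _ ≤ _ := (hyv a).1
  · calc _ ≤ K' * ‖∑ i ∈ Finset.range n, a i • y i‖ := (hyv a).2
      _ ≤ K' * (K * ‖∑ i ∈ Finset.range n, a i • x i‖) := by gcongr; exact (hxy a).2
      _ = _ := (mul_assoc _ _ _).symm

theorem of_le {m : ℕ} (h : SeqEquiv K m x y) (hnm : n ≤ m) : SeqEquiv K n x y := fun a ↦ by
  have hsum (z : ℕ → 𝒲) : ∑ i ∈ Finset.range m, (if i < n then a i else 0) • z i =
      ∑ i ∈ Finset.range n, a i • z i := by
    simp only [ite_smul, zero_smul, ← Finset.sum_filter]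
    exact Finset.sum_congr (by grind) fun _ _ ↦ rfl
  simpa only [hsum] using h fun i ↦ if i < n then a i else 0

theorem congr_left (h : SeqEquiv K n x y) (hx : ∀ i < n, x i = v i) : SeqEquiv K n v y := fun a ↦ by
  rw [← Finset.sum_congr rfl fun i hi ↦ congrArg (a i • ·) (hx i (Finset.mem_range.1 hi))]
  exact h a

theorem isIsoGraph_singleton_sum (hK : 0 < K) (h : SeqEquiv K n x y) (a : ℕ → ℝ) :
    IsIsoGraph K {∑ i ∈ Finset.range n, a i • (x i, y i)} := by
  rintro _ rfl
  simp only [Prod.smul_mk, Prod.fst_sum, Prod.snd_sum]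
  exact ⟨(h.symm hK a).2, (h a).2⟩

theorem isIsoGraph_span_image (hK : 0 < K) (h : SeqEquiv K n x y) :
    IsIsoGraph K (Submodule.span ℝ ((fun i ↦ (x i, y i)) '' Set.Iio n) : Set (𝒲 × 𝒲)) := by
  rintro w hw
  rw [← Finset.coe_Iio, SetLike.mem_coe, Submodule.mem_span_image_finset_iff_exists_fun'] at hw
  obtain ⟨a, rfl⟩ := hw
  rw [Nat.Iio_eq_range]
  exact h.isIsoGraph_singleton_sum hK a _ rfl

theorem isIsoGraph_span_range (hK : 0 < K) (h : ∀ n, SeqEquiv K n x y) :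
    IsIsoGraph K (Submodule.span ℝ (Set.range fun i ↦ (x i, y i)) : Set (𝒲 × 𝒲)) := by
  intro w hw
  obtain ⟨c, rfl⟩ := Finsupp.mem_span_range_iff_exists_finsupp.1 hw
  rw [Finsupp.sum_of_support_subset _ (suppEnd_le_iff_support_subset.1 le_rfl) _ (by simp)]
  exact (h _).isIsoGraph_singleton_sum hK c _ rfl

end SeqEquiv

theorem IsBlockedBy.seqEquiv_two [CompleteSpace 𝒲] {b : SchauderBasis ℝ 𝒲} {m : ℕ → ℕ}
    (h : IsBlockedBy b y m) (hv : ∀ k, ‖y k - v k‖ ≤ blockTolerance b (1 / 2) k * ‖y k‖) (n : ℕ) :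
    SeqEquiv 2 n y v :=
  seqEquiv_two_of_norm_sub_le fun a ↦ by
    simp only [← Finset.sum_sub_distrib, ← smul_sub]
    exact h.norm_sum_le_of_le_blockTolerance (by norm_num) hv a n

end SeqEquiv

section GlidingHump

variable {𝒲 : Type} [NormedAddCommGroup 𝒲] [NormedSpace ℝ 𝒲] (b : SchauderBasis ℝ 𝒲)
  {V : Submodule ℝ 𝒲} {y : ℕ → ℕ →₀ ℚ}

theorem exists_ne_zero_proj_eq_zero (hV : ¬FiniteDimensional ℝ V) (n : ℕ) :
    ∃ v ∈ V, v ≠ 0 ∧ b.proj n v = 0 := by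
  by_contra! hcon
  have hfin : FiniteDimensional ℝ (b.proj n).range := by
    rw [b.range_proj_eq_span]
    exact FiniteDimensional.span_of_finite ℝ (Set.toFinite _)
  refine hV (FiniteDimensional.of_injective ((b.proj n).toLinearMap.rangeRestrict.domRestrict V)
    ((injective_iff_map_eq_zero _).2 fun v hv ↦ ?_))
  by_contra hv0
  exact hcon v v.2 (by simpa using hv0) (congrArg Subtype.val hv)

theorem IsBlock.not_finiteDimensional_closedSpan (hy : IsBlock y) :
    ¬FiniteDimensional ℝ (closedSpan (ratCombination b '' Set.range y)) := by
  intro hfin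
  have hmem (k : ℕ) : ratCombination b (y k) ∈ closedSpan (ratCombination b '' Set.range y) :=
    Submodule.le_topologicalClosure _ (Submodule.subset_span ⟨y k, ⟨k, rfl⟩, rfl⟩)
  have hli : LinearIndependent ℝ
      fun k ↦ (⟨_, hmem k⟩ : closedSpan (ratCombination b '' Set.range y)) :=
    .of_comp (Submodule.subtype _)
      ((hy.isBlockedBy b).linearIndependent (hy.ratCombination_ne_zero b))
  exact not_finite_iff_infinite.2 inferInstance hli.finite

variable [CompleteSpace 𝒲]

theorem IsBlock.exists_mem_span_Ioi_norm_sub_lt (hy : IsBlock y) {v : 𝒲}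
    (hv : v ∈ closedSpan (ratCombination b '' Set.range y)) {n : ℕ}
    (hproj : b.proj (suppEnd (y n)) v = 0) {δ : ℝ} (hδ : 0 < δ) :
    ∃ d ∈ Submodule.span ℚ (y '' Set.Ioi n), ‖v - ratCombination b d‖ < δ := by
  set m := suppEnd (y n)
  set K : ℝ := b.nnnormProjBound.toReal
  obtain ⟨d, hd, hdv⟩ :=
    exists_mem_span_norm_sub_lt _ hv (δ := δ / (1 + K)) (by positivity)
  obtain ⟨d₁, hd₁, d₂, hd₂, rfl⟩ := IsBlock.exists_add_eq_of_mem_span n hd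
  refine ⟨d₂, hd₂, ?_⟩
  set u := v - ratCombination b (d₁ + d₂) with hu
  have hprojd : b.proj m (ratCombination b (d₁ + d₂)) = ratCombination b d₁ := by
    rw [map_add, map_add, proj_ratCombination_eq_zero b (hy.span_image_Ioi_le n hd₂), add_zero,
      proj_ratCombination_eq_self b (suppEnd_le_iff.2 (hy.span_image_Iic_le n hd₁))]
  calc ‖v - ratCombination b d₂‖ = ‖u - b.proj m u‖ := by
        rw [hu, map_sub, hproj, hprojd, map_add]; congr 1; abel
    _ ≤ ‖u‖ + K * ‖u‖ := (norm_sub_le _ _).trans <| by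
        gcongr; exact (b.proj m).le_of_opNorm_le (b.norm_proj_le_nnnormProjBound m) u
    _ = (1 + K) * ‖u‖ := by ring
    _ < δ := (lt_div_iff₀' (by positivity)).1 hdv

theorem IsBlock.exists_near_subspace (hy : IsBlock y)
    (hVy : V ≤ closedSpan (ratCombination b '' Set.range y)) (hV : ¬FiniteDimensional ℝ V)
    (n : ℕ) {ε : ℝ} (hε : 0 < ε) :
    ∃ d ∈ tailSubmodule n, d ≠ 0 ∧ d ∈ Submodule.span ℚ (Set.range y) ∧
      ∃ v ∈ V, ‖ratCombination b d - v‖ ≤ ε * ‖ratCombination b d‖ := by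
  obtain ⟨v, hvV, hv0, hproj⟩ := exists_ne_zero_proj_eq_zero b hV (suppEnd (y n))
  have : 0 < ‖v‖ := norm_pos_iff.2 hv0
  obtain ⟨d, hd, hdv⟩ := hy.exists_mem_span_Ioi_norm_sub_lt b (hVy hvV) hproj
    (δ := ε / (1 + ε) * ‖v‖) (by positivity)
  have hd_lower : 1 / (1 + ε) * ‖v‖ < ‖ratCombination b d‖ := by
    have hsplit : ‖v‖ = ε / (1 + ε) * ‖v‖ + 1 / (1 + ε) * ‖v‖ := by field_simp; ring
    linarith [norm_sub_norm_le v (ratCombination b d)]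
  have hdpos : 0 < ‖ratCombination b d‖ := lt_trans (by positivity) hd_lower
  refine ⟨d, tailSubmodule_anti (lt_suppEnd (hy.mem_tailSubmodule n) (hy.ne_zero n)).le
    (hy.span_image_Ioi_le n hd), ?_, Submodule.span_mono (Set.image_subset_range _ _) hd,
    v, hvV, ?_⟩
  · rintro rfl
    simp at hdpos
  · calc ‖ratCombination b d - v‖ ≤ ε / (1 + ε) * ‖v‖ := by rw [norm_sub_rev]; exact hdv.le
      _ = ε * (1 / (1 + ε) * ‖v‖) := by ring
      _ ≤ ε * ‖ratCombination b d‖ := by gcongr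

theorem IsBlock.exists_isBlock_linIsoEmbeds (hy : IsBlock y)
    (hVy : V ≤ closedSpan (ratCombination b '' Set.range y)) (hV : ¬FiniteDimensional ℝ V)
    (hVc : IsClosed (V : Set 𝒲)) :
    ∃ z : ℕ → ℕ →₀ ℚ, IsBlock z ∧ (∀ k, z k ∈ Submodule.span ℚ (Set.range y)) ∧
      LinIsoEmbeds (closedSpan (ratCombination b '' Set.range z)) V := by
  obtain ⟨z, hz, hzp⟩ := exists_isBlock_forall fun k n ↦
    hy.exists_near_subspace b hVy hV n (blockTolerance_pos b (η := 1 / 2) (by norm_num) k)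
  choose hzy v hvV hzv using hzp
  refine ⟨z, hz, hzy, (SeqEquiv.isIsoGraph_span_range two_pos
    ((hz.isBlockedBy b).seqEquiv_two hzv)).linIsoEmbeds_closedSpan hVc ?_⟩
  rintro _ ⟨_, ⟨k, rfl⟩, rfl⟩
  exact ⟨v k, hvV k, Submodule.subset_span ⟨k, rfl⟩⟩

end GlidingHump

section EmbeddingGame

/-- Finitely supported rational coefficient vectors: a countable dense supply of vectors. -/
abbrev RatVec : Type := ℕ →₀ ℚ

/-- The unit vectors with index below `N`. -/
noncomputable def unitVectors (N : ℕ) : Finset RatVec :=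
  (Finset.range N).image fun i ↦ Finsupp.single i 1

theorem unitVectors_mono : Monotone unitVectors := fun _ _ h ↦
  Finset.image_subset_image (Finset.range_mono h)

/-- The legal answers `(Γ', B)` to the challenge `(n, A)` in the embedding game. A position
consists of a finite part `Γ` of the graph of an operator and a finite set `G` of admissible
targets. The answer extends `Γ` to `Γ'` so that `A` is in the domain, and enlarges `G` by a finite
set `B` of vectors of `M` supported beyond `n` in order to do so. -/
structure IsAnswer (M : Submodule ℚ RatVec) (n : ℕ) (A : Finset RatVec)
    (Γ : Finset (RatVec × RatVec)) (G : Finset RatVec) (Γ' : Finset (RatVec × RatVec))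
    (B : Finset RatVec) : Prop where
  subset : Γ ⊆ Γ'
  mem : ∀ x ∈ B, x ∈ M ⊓ tailSubmodule n
  snd_mem : ∀ p ∈ Γ', p.2 ∈ Submodule.span ℚ (↑(G ∪ B) : Set RatVec)
  exists_image : ∀ a ∈ A, ∃ u, (a, u) ∈ Submodule.span ℚ (Γ' : Set (RatVec × RatVec))

variable {M M' L L' X : Submodule ℚ RatVec} {C C' N n n' : ℕ} {A G G' H B : Finset RatVec}
  {Γ Γ' : Finset (RatVec × RatVec)}

theorem IsAnswer.exists_mem_span (h : IsAnswer M n A Γ G Γ' B) {a : RatVec} (ha : a ∈ A) :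
    ∃ u ∈ Submodule.span ℚ (↑(G ∪ B) : Set RatVec),
      (a, u) ∈ Submodule.span ℚ (Γ' : Set (RatVec × RatVec)) := by
  obtain ⟨u, hu⟩ := h.exists_image a ha
  have hle : Submodule.span ℚ (Γ' : Set (RatVec × RatVec)) ≤
      (Submodule.span ℚ (↑(G ∪ B) : Set RatVec)).comap (LinearMap.snd ℚ RatVec RatVec) :=
    Submodule.span_le.2 h.snd_mem
  exact ⟨u, hle hu, hu⟩

theorem IsAnswer.mono (h : IsAnswer M n' A Γ G Γ' B) (hM : M ⊓ tailSubmodule n' ≤ M')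
    (hn : n ≤ n') (hG : G ⊆ G') : IsAnswer M' n A Γ G' Γ' B where
  subset := h.subset
  mem x hx := ⟨hM (h.mem x hx), tailSubmodule_anti hn (h.mem x hx).2⟩
  snd_mem p hp := Submodule.span_mono
    (Finset.coe_subset.2 (Finset.union_subset_union_left hG)) (h.snd_mem p hp)
  exists_image := h.exists_image

variable {E : Type*} [NormedAddCommGroup E] [NormedSpace ℝ E] (e : ℕ → E)

/-- The linear extension of the relation `Γ` between the vectors `∑ d i • e i` with rational `d`
is the graph of a `C`-isomorphism. -/
def IsPartialIso (C : ℕ) (Γ : Set (RatVec × RatVec)) : Prop :=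
  IsIsoGraph C (Submodule.span ℝ (ratCombinationProd e '' Γ) : Set (E × E))

variable {e}

theorem IsPartialIso.mono {Γ Γ' : Set (RatVec × RatVec)} (h : IsPartialIso e C Γ) (hC : C ≤ C')
    (hΓ : Γ' ⊆ Γ) : IsPartialIso e C' Γ' :=
  (IsIsoGraph.mono h (Submodule.span_mono (Set.image_mono hΓ))).mono_const (Nat.cast_le.2 hC)

theorem IsPartialIso.iUnion {Γ : ℕ → Set (RatVec × RatVec)} (hmono : Monotone Γ)
    (hΓ : ∀ k, IsPartialIso e C (Γ k)) : IsPartialIso e C (⋃ k, Γ k) := by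
  intro w hw
  rw [Set.image_iUnion, Submodule.span_iUnion, SetLike.mem_coe,
    Submodule.mem_iSup_of_directed _ (Monotone.directed_le fun i j hij ↦
      Submodule.span_mono (Set.image_mono (hmono hij)))] at hw
  obtain ⟨k, hk⟩ := hw
  exact hΓ k w hk

variable (e)

/-- The second player wins the embedding game from the position `(Γ, G)`: while the first player
challenges with finite subsets of `L`, the second player can answer forever within `M`, keeping
`Γ` the graph of a `C`-isomorphism. The set `W` collects the positions which occur in such a
play. -/
def Wins (C : ℕ) (L M : Submodule ℚ RatVec) (Γ : Finset (RatVec × RatVec)) (G : Finset RatVec) :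
    Prop :=
  ∃ W : Set (Finset (RatVec × RatVec) × Finset RatVec), (Γ, G) ∈ W ∧
    ∀ Γ G, (Γ, G) ∈ W → IsPartialIso e C Γ ∧
      ∀ (n : ℕ) (A : Finset RatVec), (∀ a ∈ A, a ∈ L) →
        ∃ Γ' B, IsAnswer M n A Γ G Γ' B ∧ (Γ', G ∪ B) ∈ W

variable {e}

theorem Wins.isPartialIso (h : Wins e C L M Γ G) : IsPartialIso e C Γ := by
  obtain ⟨W, hmem, hW⟩ := h
  exact (hW _ _ hmem).1

theorem Wins.exists_answer (h : Wins e C L M Γ G) (n : ℕ) (hA : ∀ a ∈ A, a ∈ L) :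
    ∃ Γ' B, IsAnswer M n A Γ G Γ' B ∧ Wins e C L M Γ' (G ∪ B) := by
  obtain ⟨W, hmem, hW⟩ := h
  obtain ⟨Γ', B, hans, hmem'⟩ := (hW _ _ hmem).2 n A hA
  exact ⟨Γ', B, hans, W, hmem', hW⟩

theorem Wins.mono (h : Wins e C L M Γ G) (hC : C ≤ C') (hL : L' ≤ L)
    (hM : ∃ n, M ⊓ tailSubmodule n ≤ M') (hG : G ⊆ G') : Wins e C' L' M' Γ G' := by
  obtain ⟨m, hM⟩ := hM
  refine ⟨{q | ∃ G ⊆ q.2, Wins e C L M q.1 G}, ⟨G, hG, h⟩, ?_⟩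
  rintro Γ G' ⟨G, hG, hw⟩
  refine ⟨hw.isPartialIso.mono hC subset_rfl, fun n A hA ↦ ?_⟩
  obtain ⟨Γ', B, hans, hw'⟩ := hw.exists_answer (max n m) fun a ha ↦ hL (hA a ha)
  have hM' : M ⊓ tailSubmodule (max n m) ≤ M' :=
    (inf_le_inf_left _ (tailSubmodule_anti (le_max_right _ _))).trans hM
  exact ⟨Γ', B, hans.mono hM' (le_max_left _ _) hG, G ∪ B,
    Finset.union_subset_union_left hG, hw'⟩

variable (e)

/-- The second player wins within `M`, with the first `N` unit vectors as initial targets, once the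
first player is confined to a suitable subspace. -/
def WinsWithin (C N : ℕ) (M : Submodule ℚ RatVec) : Prop :=
  ∃ L ≤ M, MeetsTails L ∧ Wins e C L M ∅ (unitVectors N)

/-- The second player wins within `M` from the position `(Γ, G)`, once the first player is confined
to the span of `H` and a suitable subspace of `M`. -/
def WinsAgainst (C : ℕ) (M : Submodule ℚ RatVec) (Γ : Finset (RatVec × RatVec))
    (H G : Finset RatVec) : Prop :=
  ∃ L ≤ M, MeetsTails L ∧ Wins e C (L ⊔ Submodule.span ℚ (H : Set RatVec)) M Γ G

variable {e}

theorem WinsWithin.mono (h : WinsWithin e C N M) (hC : C ≤ C') {N' : ℕ} (hN : N ≤ N')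
    (hM : ∃ n, M ⊓ tailSubmodule n ≤ M') : WinsWithin e C' N' M' := by
  obtain ⟨L, hL, hLt, hw⟩ := h
  obtain ⟨n, hn⟩ := hM
  exact ⟨L ⊓ tailSubmodule n, (inf_le_inf_right _ hL).trans hn, hLt.inf_tailSubmodule n,
    hw.mono hC inf_le_left ⟨n, hn⟩ (unitVectors_mono hN)⟩

theorem WinsAgainst.mono (h : WinsAgainst e C M Γ H G) (hM : ∃ n, M ⊓ tailSubmodule n ≤ M') :
    WinsAgainst e C M' Γ H G := by
  obtain ⟨L, hL, hLt, hw⟩ := h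
  obtain ⟨n, hn⟩ := hM
  exact ⟨L ⊓ tailSubmodule n, (inf_le_inf_right _ hL).trans hn, hLt.inf_tailSubmodule n,
    hw.mono le_rfl (sup_le_sup_right inf_le_left _) ⟨n, hn⟩ subset_rfl⟩

theorem WinsWithin.winsAgainst (h : WinsWithin e C N M) :
    WinsAgainst e C M ∅ ∅ (unitVectors N) := by
  obtain ⟨L, hL, hLt, hw⟩ := h
  exact ⟨L, hL, hLt, by simpa using hw⟩

theorem WinsAgainst.exists_union (h : WinsAgainst e C M Γ H G) :
    ∃ L ≤ M, MeetsTails L ∧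
      ∀ H' : Finset RatVec, (∀ x ∈ H', x ∈ L) → WinsAgainst e C M Γ (H ∪ H') G := by
  obtain ⟨L, hL, hLt, hw⟩ := h
  refine ⟨L, hL, hLt, fun H' hH' ↦
    ⟨L, hL, hLt, hw.mono le_rfl ?_ ⟨0, inf_le_left⟩ subset_rfl⟩⟩
  rw [Finset.coe_union, Submodule.span_union]
  exact sup_le le_sup_left (sup_le le_sup_right (le_sup_of_le_left (Submodule.span_le.2 hH')))

theorem WinsAgainst.exists_answer (h : WinsAgainst e C M Γ H G) :
    ∃ Γ' B, IsAnswer M 0 H Γ G Γ' B ∧ WinsAgainst e C M Γ' H (G ∪ B) := by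
  obtain ⟨L, hL, hLt, hw⟩ := h
  obtain ⟨Γ', B, hans, hw'⟩ := hw.exists_answer 0 fun a ha ↦
    Submodule.mem_sup_right (Submodule.subset_span ha)
  exact ⟨Γ', B, hans, L, hL, hLt, hw'⟩

theorem exists_forall_le_winsWithin (h : ∀ M, MeetsTails M → ∃ C N, WinsWithin e C N M) :
    ∃ N X, MeetsTails X ∧ ∀ M ≤ X, MeetsTails M → WinsWithin e N N M := by
  by_contra! hcon
  obtain ⟨X, -, hX, hQ⟩ := meetsTails_top.exists_forall_of_countable
    (Q := fun N M ↦ ¬WinsWithin e N N M)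
    (fun N M M' hM hQ hw ↦ hQ (hw.mono le_rfl le_rfl hM)) (fun N M _ hM ↦ hcon N M hM)
  obtain ⟨C, N, hw⟩ := h X hX
  exact hQ (max C N) (hw.mono (le_max_left _ _) (le_max_right _ _) ⟨0, inf_le_left⟩)

theorem exists_forall_le_winsAgainst_iff (e : ℕ → E) (C : ℕ) (hX : MeetsTails X) :
    ∃ X₁ ≤ X, MeetsTails X₁ ∧ ∀ M ≤ X₁, MeetsTails M →
      ∀ Γ H G, WinsAgainst e C M Γ H G ↔ WinsAgainst e C X₁ Γ H G := by
  let P (s : Finset (RatVec × RatVec) × Finset RatVec × Finset RatVec)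
    (M : Submodule ℚ RatVec) : Prop := WinsAgainst e C M s.1 s.2.1 s.2.2
  have hP {s M M'} (h : P s M) (hM : ∃ n, M ⊓ tailSubmodule n ≤ M') : P s M' := h.mono hM
  obtain ⟨X₁, hX₁X, hX₁, hQ⟩ := hX.exists_forall_of_countable
    (Q := fun s M ↦ ¬P s M ∨ ∀ M' ≤ M, MeetsTails M' → P s M')
    (by
      rintro s M M' ⟨n, hn⟩ (h | h)
      · exact .inl fun h' ↦ h (hP h' ⟨n, hn⟩)
      · exact .inr fun M'' hM'' hMt ↦ hP (h (M'' ⊓ tailSubmodule n)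
          ((inf_le_inf_right _ hM'').trans hn) (hMt.inf_tailSubmodule n))
          ⟨0, inf_le_left.trans inf_le_left⟩)
    (by
      intro s M _ hM
      by_cases h : ∀ M' ≤ M, MeetsTails M' → P s M'
      · exact ⟨M, le_rfl, hM, .inr h⟩
      · push Not at h
        obtain ⟨M', hle, hM', hs⟩ := h
        exact ⟨M', hle, hM', .inl hs⟩)
  refine ⟨X₁, hX₁X, hX₁, fun M hM hMt Γ H G ↦ ⟨fun h ↦ h.mono ⟨0, inf_le_left.trans hM⟩,
    fun h ↦ ?_⟩⟩
  exact (hQ (Γ, H, G)).resolve_left (not_not.2 h) M hM hMt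

theorem exists_forall_winsAgainst_exists_union (hX : MeetsTails X)
    (hstable : ∀ M ≤ X, MeetsTails M →
      ∀ Γ H G, WinsAgainst e C M Γ H G ↔ WinsAgainst e C X Γ H G) :
    ∃ X' ≤ X, MeetsTails X' ∧ ∀ Γ H G, WinsAgainst e C X Γ H G →
      ∃ n, ∀ H' : Finset RatVec, (∀ x ∈ H', x ∈ X' ⊓ tailSubmodule n) →
        WinsAgainst e C X Γ (H ∪ H') G := by
  obtain ⟨X', hX'X, hX', hunion⟩ := hX.exists_forall_of_countable
    (Q := fun (s : Finset (RatVec × RatVec) × Finset RatVec × Finset RatVec) M ↦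
      WinsAgainst e C X s.1 s.2.1 s.2.2 → ∃ n, ∀ H' : Finset RatVec,
        (∀ x ∈ H', x ∈ M ⊓ tailSubmodule n) → WinsAgainst e C X s.1 (s.2.1 ∪ H') s.2.2)
    (by
      rintro s M M' ⟨n, hn⟩ h hs
      obtain ⟨k, hk⟩ := h hs
      refine ⟨max n k, fun H' hH' ↦ hk H' fun x hx ↦ ?_⟩
      exact ⟨hn ⟨(hH' x hx).1, tailSubmodule_anti (le_max_left _ _) (hH' x hx).2⟩,
        tailSubmodule_anti (le_max_right _ _) (hH' x hx).2⟩)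
    (by
      rintro ⟨Γ, H, G⟩ M hM hMt
      by_cases hs : WinsAgainst e C M Γ H G
      · obtain ⟨L, hL, hLt, hLH⟩ := hs.exists_union
        exact ⟨L, hL, hLt, fun _ ↦ ⟨0, fun H' hH' ↦
          (hstable M hM hMt _ _ _).1 (hLH H' fun x hx ↦ (hH' x hx).1)⟩⟩
      · exact ⟨M, le_rfl, hMt, fun h' ↦ (hs ((hstable M hM hMt _ _ _).2 h')).elim⟩)
  exact ⟨X', hX'X, hX', fun Γ H G ↦ hunion (Γ, H, G)⟩

variable (e)

/-- A strategy for the second player in the variant of the embedding game where the first player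
builds up the finite set `H` of challenges, from vectors of `X` supported sufficiently far out, and
also prescribes a subspace `Z` of `X` from which the new targets have to be taken. The predicate
`P Γ H G` singles out the positions which occur. -/
structure IsStrategy (C : ℕ) (X : Submodule ℚ RatVec)
    (P : Finset (RatVec × RatVec) → Finset RatVec → Finset RatVec → Prop) : Prop where
  isPartialIso : ∀ {Γ H G}, P Γ H G → IsPartialIso e C Γ
  exists_union : ∀ {Γ H G}, P Γ H G →
    ∃ n, ∀ H' : Finset RatVec, (∀ x ∈ H', x ∈ X ⊓ tailSubmodule n) → P Γ (H ∪ H') G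
  exists_answer : ∀ {Γ H G}, P Γ H G → ∀ Z ≤ X, MeetsTails Z →
    ∃ Γ' B, IsAnswer Z 0 H Γ G Γ' B ∧ P Γ' H (G ∪ B)

variable {e}

theorem exists_isStrategy (h : ∀ M, MeetsTails M → ∃ C N, WinsWithin e C N M) :
    ∃ C N X P, MeetsTails X ∧ WinsWithin e C N X ∧ IsStrategy e C X P ∧
      P ∅ ∅ (unitVectors N) := by
  obtain ⟨N, X, hX, hwin⟩ := exists_forall_le_winsWithin h
  obtain ⟨X₁, hX₁X, hX₁, hstable⟩ := exists_forall_le_winsAgainst_iff e N hX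
  obtain ⟨X₂, hX₂, hX₂t, hunion⟩ := exists_forall_winsAgainst_exists_union hX₁ hstable
  refine ⟨N, N, X₂, WinsAgainst e N X₁, hX₂t, hwin X₂ (hX₂.trans hX₁X) hX₂t, ?_,
    (hwin X₁ hX₁X hX₁).winsAgainst⟩
  refine ⟨fun ⟨_, _, _, hw⟩ ↦ hw.isPartialIso, hunion _ _ _,
    fun hs Z hZ hZt ↦ ?_⟩
  simp only [← hstable Z (hZ.trans hX₂) hZt] at hs ⊢
  exact hs.exists_answer

end EmbeddingGame

section JointPlay

variable {𝒲 : Type} [NormedAddCommGroup 𝒲] [NormedSpace ℝ 𝒲] {e : ℕ → 𝒲} {C n : ℕ}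
  {L X Z : Submodule ℚ RatVec} {U H₀ : Finset RatVec}
  {P : Finset (RatVec × RatVec) → Finset RatVec → Finset RatVec → Prop}

/-- A pair of positions in two runs of the embedding game: the targets of the first run become
challenges of the second one. -/
structure JointPosition where
  Γ₁ : Finset (RatVec × RatVec)
  G₁ : Finset RatVec
  Γ₂ : Finset (RatVec × RatVec)
  H : Finset RatVec
  G₂ : Finset RatVec

variable (e C n L X Z U H₀ P)

/-- The invariant of the joint run: both positions are winning for the second player, and apart
from the initial targets `U`, the targets of the first run are challenges of the second run
supported beyond `n`, while those of the second run lie in `Z`. -/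
structure JointPosition.IsSafe (q : JointPosition) : Prop where
  wins : Wins e C L X q.Γ₁ q.G₁
  strategy : P q.Γ₂ q.H q.G₂
  subset : H₀ ⊆ q.H
  G₁_subset : ∀ g ∈ q.G₁, g ∈ U ∨ g ∈ q.H ∧ g ∈ tailSubmodule n
  G₂_subset : ∀ g ∈ q.G₂, g ∈ U ∨ g ∈ Z

/-- The effect of a round of the joint run from `q` to `q'` with the challenge `a` in the first
run. -/
structure JointPosition.IsRound (a : RatVec) (q q' : JointPosition) : Prop where
  Γ₁_subset : q.Γ₁ ⊆ q'.Γ₁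
  Γ₂_subset : q.Γ₂ ⊆ q'.Γ₂
  H_subset : q.H ⊆ q'.H
  exists_image₁ : ∃ u ∈ Submodule.span ℚ (q'.G₁ : Set RatVec),
    (a, u) ∈ Submodule.span ℚ (q'.Γ₁ : Set (RatVec × RatVec))
  exists_image₂ : ∀ x ∈ q'.H, ∃ u ∈ Submodule.span ℚ (q'.G₂ : Set RatVec),
    (x, u) ∈ Submodule.span ℚ (q'.Γ₂ : Set (RatVec × RatVec))

variable {e C n L X Z U H₀ P}

theorem JointPosition.IsSafe.exists_isRound {q : JointPosition}
    (hq : q.IsSafe e C n L X Z U H₀ P) (hP : IsStrategy e C X P) (hZX : Z ≤ X)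
    (hZ : MeetsTails Z) {a : RatVec} (ha : a ∈ L) :
    ∃ q' : JointPosition, q'.IsSafe e C n L X Z U H₀ P ∧ q.IsRound a q' := by
  obtain ⟨m, hm⟩ := hP.exists_union hq.strategy
  obtain ⟨Γ₁, B₁, hans₁, hwins⟩ := hq.wins.exists_answer (A := {a}) (max m n) (by simpa using ha)
  have hB₁ (k : ℕ) (hk : k ≤ max m n) (x) (hx : x ∈ B₁) : x ∈ X ⊓ tailSubmodule k :=
    inf_le_inf_left _ (tailSubmodule_anti hk) (hans₁.mem x hx)
  obtain ⟨Γ₂, B₂, hans₂, hstrat⟩ :=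
    hP.exists_answer (hm B₁ (hB₁ m (le_max_left _ _))) Z hZX hZ
  refine ⟨⟨Γ₁, q.G₁ ∪ B₁, Γ₂, q.H ∪ B₁, q.G₂ ∪ B₂⟩,
    ⟨hwins, hstrat, hq.subset.trans Finset.subset_union_left, fun g hg ↦ ?_, fun g hg ↦ ?_⟩,
    ⟨hans₁.subset, hans₂.subset, Finset.subset_union_left,
      hans₁.exists_mem_span (Finset.mem_singleton_self a), fun x hx ↦ hans₂.exists_mem_span hx⟩⟩
  · rcases Finset.mem_union.1 hg with hg | hg
    · exact (hq.G₁_subset g hg).imp_right fun h ↦ ⟨Finset.mem_union_left _ h.1, h.2⟩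
    · exact .inr ⟨Finset.mem_union_right _ hg, (hB₁ n (le_max_right _ _) g hg).2⟩
  · rcases Finset.mem_union.1 hg with hg | hg
    · exact hq.G₂_subset g hg
    · exact .inr (hans₂.mem g hg).1

theorem exists_isSafe_isRound (hwins : Wins e C L X ∅ U) (hP : IsStrategy e C X P)
    (hH₀ : P ∅ H₀ U) (hZX : Z ≤ X) (hZ : MeetsTails Z) {y : ℕ → RatVec} (hy : ∀ k, y k ∈ L) :
    ∃ q : ℕ → JointPosition,
      ∀ k, (q k).IsSafe e C n L X Z U H₀ P ∧ (q k).IsRound (y k) (q (k + 1)) :=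
  exists_seq_of_forall_exists_succ
    ⟨⟨∅, U, ∅, H₀, U⟩, hwins, hH₀, subset_rfl, fun _ ↦ .inl, fun _ ↦ .inl⟩
    fun k _ hq ↦ hq.exists_isRound hP hZX hZ (hy k)

end JointPlay

section LimitEmbeddings

variable {𝒲 : Type} [NormedAddCommGroup 𝒲] [NormedSpace ℝ 𝒲] [CompleteSpace 𝒲]

theorem linIsoEmbeds_of_monotone_isPartialIso {e : ℕ → 𝒲} {C : ℕ}
    {Γ : ℕ → Finset (RatVec × RatVec)} (hmono : Monotone Γ)
    (hΓ : ∀ k, IsPartialIso e C (Γ k)) {S T : Set RatVec}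
    (hST : ∀ s ∈ S, ∃ k, ∃ t ∈ Submodule.span ℚ T,
      (s, t) ∈ Submodule.span ℚ (Γ k : Set (RatVec × RatVec))) :
    LinIsoEmbeds (closedSpan (ratCombination e '' S)) (closedSpan (ratCombination e '' T)) := by
  refine IsIsoGraph.linIsoEmbeds_closedSpan
    (IsPartialIso.iUnion (fun i j hij ↦ Finset.coe_subset.2 (hmono hij)) hΓ)
    (Submodule.isClosed_topologicalClosure _) ?_
  rintro _ ⟨s, hs, rfl⟩
  obtain ⟨k, t, ht, hst⟩ := hST s hs
  exact ⟨ratCombination e t,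
    Submodule.le_topologicalClosure _ (map_mem_span_image_of_mem_span _ ht),
    map_mem_span_image_of_mem_span (ratCombinationProd e)
      (Submodule.span_mono (Set.subset_iUnion (fun k ↦ (Γ k : Set (RatVec × RatVec))) k) hst)⟩

theorem exists_linIsoEmbeds_of_isStrategy {e : ℕ → 𝒲} {C : ℕ} {L X Z : Submodule ℚ RatVec}
    {U H₀ : Finset RatVec} {P : Finset (RatVec × RatVec) → Finset RatVec → Finset RatVec → Prop}
    (hwins : Wins e C L X ∅ U) (hP : IsStrategy e C X P) (hH₀ : P ∅ H₀ U) (hZX : Z ≤ X)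
    (hZ : MeetsTails Z) {y : ℕ → RatVec} (hy : ∀ k, y k ∈ L) (n : ℕ) :
    ∃ S : Set RatVec, (∀ s ∈ S, s ∈ tailSubmodule n) ∧
      LinIsoEmbeds (closedSpan (ratCombination e '' Set.range y))
        (closedSpan (ratCombination e '' (U ∪ S))) ∧
      LinIsoEmbeds (closedSpan (ratCombination e '' (H₀ ∪ S)))
        (closedSpan (ratCombination e '' (U ∪ Z))) := by
  obtain ⟨q, hq⟩ := exists_isSafe_isRound (n := n) hwins hP hH₀ hZX hZ hy
  refine ⟨{x | (∃ k, x ∈ (q k).H) ∧ x ∈ tailSubmodule n}, fun x hx ↦ hx.2,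
    linIsoEmbeds_of_monotone_isPartialIso (Γ := fun k ↦ (q k).Γ₁)
      (monotone_nat_of_le_succ fun k ↦ (hq k).2.Γ₁_subset)
      (fun k ↦ (hq k).1.wins.isPartialIso) ?_,
    linIsoEmbeds_of_monotone_isPartialIso (Γ := fun k ↦ (q k).Γ₂)
      (monotone_nat_of_le_succ fun k ↦ (hq k).2.Γ₂_subset)
      (fun k ↦ hP.isPartialIso (hq k).1.strategy) ?_⟩
  · rintro _ ⟨k, rfl⟩
    obtain ⟨u, hu, hyu⟩ := (hq k).2.exists_image₁
    refine ⟨k + 1, u, Submodule.span_mono (fun g hg ↦ ?_) hu, hyu⟩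
    exact ((hq (k + 1)).1.G₁_subset g hg).imp_right fun h ↦ ⟨⟨k + 1, h.1⟩, h.2⟩
  · intro x hx
    obtain ⟨k, hk⟩ : ∃ k, x ∈ (q k).H :=
      hx.elim (fun hx ↦ ⟨0, (hq 0).1.subset hx⟩) fun hx ↦ hx.1
    obtain ⟨u, hu, hxu⟩ := (hq k).2.exists_image₂ x ((hq k).2.H_subset hk)
    exact ⟨k + 1, u, Submodule.span_mono (hq (k + 1)).1.G₂_subset hu, hxu⟩

end LimitEmbeddings

section MinimalSpaces

variable {𝒲 : Type} [NormedAddCommGroup 𝒲] [NormedSpace ℝ 𝒲] (b : SchauderBasis ℝ 𝒲)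
  {g h y z : ℕ → RatVec}

theorem suppEnd_single_one (k : ℕ) : suppEnd (Finsupp.single k 1 : RatVec) = k + 1 := by
  simp [suppEnd]

theorem isBlock_single_one : IsBlock fun k ↦ (Finsupp.single k 1 : RatVec) where
  ne_zero k := by simp
  succ_mem k := by
    rw [suppEnd_single_one]
    exact single_mem_tailSubmodule _ _

theorem blockBoundary_single_one :
    blockBoundary (fun k ↦ (Finsupp.single k 1 : RatVec)) = id :=
  funext fun k ↦ by cases k <;> simp [blockBoundary, suppEnd_single_one]

theorem IsBlock.mem_tailSubmodule_blockBoundary (hz : IsBlock z) {N k : ℕ} (h : N ≤ k) :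
    z k ∈ tailSubmodule (blockBoundary z N) := by
  cases N with
  | zero => exact mem_tailSubmodule_zero
  | succ N => exact hz.mem_of_lt h

theorem LinIsoEmbeds.of_le {X Y : Submodule ℝ 𝒲} (h : X ≤ Y) : LinIsoEmbeds X Y :=
  ⟨X.subtype, fun v ↦ h v.2, 1, 1, one_pos, fun v ↦ by simp⟩

theorem closedSpan_ratCombination_le {S T : Set RatVec} (h : S ⊆ Submodule.span ℚ T) :
    closedSpan (ratCombination b '' S) ≤ closedSpan (ratCombination b '' T) := by
  refine Submodule.topologicalClosure_mono (Submodule.span_le.2 ?_)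
  rintro _ ⟨d, hd, rfl⟩
  exact map_mem_span_image_of_mem_span _ (h hd)

variable [CompleteSpace 𝒲]

theorem IsBlock.linIsoEmbeds_exchange (hg : IsBlock g) (hh : IsBlock h) {N : ℕ} {S : Set RatVec}
    (hSg : ∀ s ∈ S, s ∈ tailSubmodule (blockBoundary g N))
    (hSh : ∀ s ∈ S, s ∈ tailSubmodule (blockBoundary h N)) :
    LinIsoEmbeds (closedSpan (ratCombination b '' (g '' Set.Iio N ∪ S)))
      (closedSpan (ratCombination b '' (h '' Set.Iio N ∪ S))) := by
  simp only [Set.image_union, Set.image_image]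
  refine (hg.isBlockedBy b).linIsoEmbeds_exchange (hh.isBlockedBy b)
    (hg.ratCombination_ne_zero b) (hh.ratCombination_ne_zero b) N ?_
  rintro _ ⟨d, hd, rfl⟩
  exact ⟨proj_ratCombination_eq_zero b (hSg d hd), proj_ratCombination_eq_zero b (hSh d hd)⟩

theorem IsBlock.linIsoEmbeds_unitVectors_union (hz : IsBlock z) (N : ℕ) :
    LinIsoEmbeds
      (closedSpan (ratCombination b '' (unitVectors N ∪ Submodule.span ℚ (z '' Set.Ici N))))
      (closedSpan (ratCombination b '' Set.range z)) := by
  have htail (m : ℕ) (hm : ∀ k, N ≤ k → z k ∈ tailSubmodule m) :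
      ∀ d ∈ Submodule.span ℚ (z '' Set.Ici N), d ∈ tailSubmodule m :=
    fun _ hd ↦ Submodule.span_le.2 (Set.image_subset_iff.2 hm) hd
  have hexch := isBlock_single_one.linIsoEmbeds_exchange b hz (N := N)
    (htail _ fun k hk ↦ tailSubmodule_anti (by simpa [blockBoundary_single_one])
      (hz.mem_tailSubmodule k))
    (htail _ fun k hk ↦ hz.mem_tailSubmodule_blockBoundary hk)
  rw [unitVectors, Finset.coe_image, Finset.coe_range]
  refine hexch.trans (.of_le (closedSpan_ratCombination_le b (Set.union_subset ?_ ?_)))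
  · exact (Set.image_subset_range _ _).trans Submodule.subset_span
  · exact Submodule.span_mono (Set.image_subset_range _ _)

/-- `[y] ↪ [U ∪ S] ≅ [h '' Iio N ∪ S] ↪ [U ∪ Z] ≅ [z '' Iio N ∪ Z] ⊆ [z]`, where `U` is the set of
the first `N` unit vectors, `Z` is a tail of `z`, and the two non-surjective embeddings come from
the two runs of the game. -/
theorem IsStrategy.linIsoEmbeds {C N : ℕ} {L X : Submodule ℚ RatVec}
    {P : Finset (RatVec × RatVec) → Finset RatVec → Finset RatVec → Prop}
    (hP : IsStrategy b C X P) (hX : MeetsTails X) (hP₀ : P ∅ ∅ (unitVectors N))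
    (hwins : Wins b C L X ∅ (unitVectors N)) (hy : ∀ k, y k ∈ L) (hz : IsBlock z)
    (hzX : ∀ k, z k ∈ X) :
    LinIsoEmbeds (closedSpan (ratCombination b '' Set.range y))
      (closedSpan (ratCombination b '' Set.range z)) := by
  have hZX : Submodule.span ℚ (z '' Set.Ici N) ≤ X :=
    Submodule.span_le.2 (Set.image_subset_iff.2 fun k _ ↦ hzX k)
  have hZ : MeetsTails (Submodule.span ℚ (z '' Set.Ici N)) := fun n ↦
    ⟨z (max n N), Submodule.subset_span ⟨_, le_max_right n N, rfl⟩,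
      tailSubmodule_anti (le_max_left _ _) (hz.mem_tailSubmodule _), hz.ne_zero _⟩
  obtain ⟨m, hm⟩ := hP.exists_union hP₀
  obtain ⟨h, hh, hhX⟩ := MeetsTails.exists_isBlock fun _ ↦ hX.inf_tailSubmodule m
  have hH₀ := hm ((Finset.range N).image h) (Finset.forall_mem_image.2 fun k _ ↦ hhX k)
  rw [Finset.empty_union] at hH₀
  obtain ⟨S, hS, hyS, hhZ⟩ :=
    exists_linIsoEmbeds_of_isStrategy hwins hP hH₀ hZX hZ hy (max N (blockBoundary h N))
  refine (hyS.trans ?_).trans (hhZ.trans (hz.linIsoEmbeds_unitVectors_union b N))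
  simp only [unitVectors, Finset.coe_image, Finset.coe_range]
  exact isBlock_single_one.linIsoEmbeds_exchange b hh
    (fun s hs ↦ tailSubmodule_anti (by simp [blockBoundary_single_one]) (hS s hs))
    (fun s hs ↦ tailSubmodule_anti (le_max_right _ _) (hS s hs))

theorem exists_isMinimalSpace_of_forall_winsWithin
    (hwin : ∀ M, MeetsTails M → ∃ C N, WinsWithin b C N M) :
    ∃ X : Submodule ℝ 𝒲,
      IsClosed (X : Set 𝒲) ∧ ¬FiniteDimensional ℝ X ∧ IsMinimalSpace X := by
  obtain ⟨C, N, X, P, hX, ⟨L, hLX, hL, hwins⟩, hP, hP₀⟩ := exists_isStrategy hwin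
  obtain ⟨y, hy, hyL⟩ := MeetsTails.exists_isBlock fun _ ↦ hL
  refine ⟨closedSpan (ratCombination b '' Set.range y), Submodule.isClosed_topologicalClosure _,
    hy.not_finiteDimensional_closedSpan b, fun V hVy hVc hV ↦ ?_⟩
  obtain ⟨z, hz, hzy, hzV⟩ := hy.exists_isBlock_linIsoEmbeds b hVy hV hVc
  have hyX : Submodule.span ℚ (Set.range y) ≤ X :=
    Submodule.span_le.2 (Set.range_subset_iff.2 fun k ↦ hLX (hyL k))
  exact (hP.linIsoEmbeds b hX hP₀ hwins hyL hz fun k ↦ hyX (hzy k)).trans hzV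

end MinimalSpaces

section Survival

theorem exists_forall_mem_span_image {R V ι : Type*} [Semiring R] [AddCommMonoid V] [Module R V]
    {y : ι → V} {S : ℕ → Set ι} (hS : Monotone S) {A : Finset V}
    (hA : ∀ a ∈ A, a ∈ Submodule.span R (y '' ⋃ m, S m)) :
    ∃ m, ∀ a ∈ A, a ∈ Submodule.span R (y '' S m) := by
  have hmono : Monotone fun m ↦ Submodule.span R (y '' S m) := fun m n hmn ↦
    Submodule.span_mono (Set.image_mono (hS hmn))
  have hex : ∀ a ∈ A, ∃ m, a ∈ Submodule.span R (y '' S m) := fun a ha ↦ by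
    rw [← Submodule.mem_iSup_of_directed _ hmono.directed_le, ← Submodule.span_iUnion,
      ← Set.image_iUnion]
    exact hA a ha
  choose! m hm using hex
  exact ⟨A.sup m, fun a ha ↦ hmono (Finset.le_sup ha) (hm a ha)⟩

theorem exists_forall_lt_omega_one {κ : Type} [Countable κ] {P : κ → Ordinal.{0} → Prop}
    (anti : ∀ i, Antitone (P i)) (h : ∀ α < Ordinal.omega 1, ∃ i, P i α) :
    ∃ i, ∀ α < Ordinal.omega 1, P i α := by
  by_contra! hcon
  choose f hf hfP using hcon
  obtain ⟨i, hi⟩ := h (⨆ i, f i) (Ordinal.iSup_lt_omega_one hf)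
  exact hfP i (anti i (Ordinal.le_iSup f i) hi)

/-- The sequences of nonzero vectors of `M` in which the `i`-th vector is supported beyond `i`. -/
def IsTailSequence (M : Submodule ℚ RatVec) (y : ℕ → RatVec) : Prop :=
  ∀ i, y i ≠ 0 ∧ y i ∈ M ⊓ tailSubmodule i

theorem IsTailSequence.span_range_le {M : Submodule ℚ RatVec} {y : ℕ → RatVec}
    (hy : IsTailSequence M y) : Submodule.span ℚ (Set.range y) ≤ M :=
  Submodule.span_le.2 (Set.range_subset_iff.2 fun i ↦ (hy i).2.1)

theorem IsTailSequence.meetsTails {M : Submodule ℚ RatVec} {y : ℕ → RatVec}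
    (hy : IsTailSequence M y) : MeetsTails (Submodule.span ℚ (Set.range y)) := fun n ↦
  ⟨y n, Submodule.subset_span ⟨n, rfl⟩, (hy n).2.2, (hy n).1⟩

/-- A position in the construction of an embedding of a sequence `y` into the span of a sequence
`x`: the list of the images of the first vectors of `y`, and a finite set of indices `i` for which
`x i` may be used in these images. -/
abbrev TreePosition : Type := List RatVec × Finset ℕ

/-- The move from `q` to `q'` adds one vector to the list of images, and enlarges the set of
indices by indices `≥ n` only. -/
structure IsMove (n : ℕ) (q q' : TreePosition) : Prop where
  exists_append : ∃ u, q'.1 = q.1 ++ [u]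
  subset : q.2 ⊆ q'.2
  mem_or_le : ∀ i ∈ q'.2, i ∈ q.2 ∨ n ≤ i

/-- The graph of the partial map which sends the first vectors of `y` to the entries of `v`. -/
noncomputable def listGraph (y : ℕ → RatVec) (v : List RatVec) : Finset (RatVec × RatVec) :=
  (Finset.range v.length).image fun i ↦ (y i, v.getD i 0)

variable {E : Type*} [NormedAddCommGroup E] [NormedSpace ℝ E] {e : ℕ → E} {x y y' z : ℕ → RatVec}
  {v v' : List RatVec} {C k n N : ℕ} {α β : Ordinal.{0}}
  {q : TreePosition} {Q : Finset TreePosition}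

theorem listGraph_congr (h : ∀ i < v.length, y i = y' i) : listGraph y v = listGraph y' v :=
  Finset.image_congr fun i hi ↦ by simp only [h i (Finset.mem_range.1 hi)]

theorem listGraph_subset (h : v <+: v') : listGraph y v ⊆ listGraph y v' := by
  obtain ⟨r, rfl⟩ := h
  intro p hp
  obtain ⟨i, hi, rfl⟩ := Finset.mem_image.1 hp
  rw [Finset.mem_range] at hi
  refine Finset.mem_image.2 ⟨i, Finset.mem_range.2 (hi.trans_le ?_), ?_⟩
  · exact (List.prefix_append v r).length_le
  · rw [List.getD_append _ _ _ _ hi]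

variable (e x y)

/-- The positions in which the images lie in the appropriate span and depend `C`-isomorphically on
the vectors of `y`. -/
structure IsLegal (C : ℕ) (q : TreePosition) : Prop where
  mem_span : ∀ u ∈ q.1, u ∈ Submodule.span ℚ (x '' (q.2 : Set ℕ))
  isPartialIso : IsPartialIso e C (listGraph y q.1 : Set (RatVec × RatVec))

/-- From the position `q`, the embedding of `y` can be continued along a decreasing sequence of
ordinals starting from `α`, no matter how far out the new indices have to be. -/
def Survives (C : ℕ) (α : Ordinal.{0}) (q : TreePosition) : Prop :=
  IsLegal e x y C q ∧ ∀ β, ∀ _ : β < α, ∀ n, ∃ q', IsMove n q q' ∧ Survives C β q'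
termination_by α

variable {e x y}

theorem IsLegal.congr (h : IsLegal e x y C q) (hy : ∀ i < q.1.length, y i = y' i) :
    IsLegal e x y' C q :=
  ⟨h.mem_span, listGraph_congr hy ▸ h.isPartialIso⟩

theorem survives_iff : Survives e x y C α q ↔
    IsLegal e x y C q ∧ ∀ β < α, ∀ n, ∃ q', IsMove n q q' ∧ Survives e x y C β q' := by
  rw [Survives]

theorem Survives.isLegal (h : Survives e x y C α q) : IsLegal e x y C q := (survives_iff.1 h).1

theorem Survives.anti (h : Survives e x y C β q) (hαβ : α ≤ β) : Survives e x y C α q := by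
  rw [survives_iff] at h ⊢
  exact ⟨h.1, fun γ hγ ↦ h.2 γ (hγ.trans_le hαβ)⟩

variable (e x)

/-- For every countable ordinal `α`, some sequence of nonzero vectors in successive tails of the
span of `x`, with the same first `k` vectors as `z`, survives for `α` rounds from every position in
`Q` simultaneously. -/
def HasLongSurvival (C k : ℕ) (z : ℕ → RatVec) (Q : Finset TreePosition) : Prop :=
  ∀ α < Ordinal.omega 1, ∃ y : ℕ → RatVec,
    IsTailSequence (Submodule.span ℚ (Set.range x)) y ∧ (∀ i < k, y i = z i) ∧
      ∀ q ∈ Q, Survives e x y C α q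

variable {e x}

theorem HasLongSurvival.exists_update (h : HasLongSurvival e x C k z Q) :
    ∃ z', (∀ i < k, z' i = z i) ∧ HasLongSurvival e x C (k + 1) z' Q := by
  obtain ⟨d, hd⟩ := exists_forall_lt_omega_one
    (P := fun d α ↦ ∃ y : ℕ → RatVec,
      IsTailSequence (Submodule.span ℚ (Set.range x)) y ∧
        (∀ i < k + 1, y i = Function.update z k d i) ∧ ∀ q ∈ Q, Survives e x y C α q)
    (fun d α β hαβ ⟨y, hy, hyz, hQ⟩ ↦ ⟨y, hy, hyz, fun q hq ↦ (hQ q hq).anti hαβ⟩)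
    (fun α hα ↦ by
      obtain ⟨y, hy, hyz, hQ⟩ := h α hα
      refine ⟨y k, y, hy, fun i hi ↦ ?_, hQ⟩
      obtain hi | rfl := Nat.lt_succ_iff_lt_or_eq.1 hi
      · rw [Function.update_of_ne hi.ne, hyz i hi]
      · rw [Function.update_self])
  exact ⟨Function.update z k d, fun i hi ↦ Function.update_of_ne hi.ne _ _, hd⟩

theorem HasLongSurvival.exists_move (h : HasLongSurvival e x C k z Q) (hq : q ∈ Q) (n : ℕ) :
    ∃ q', IsMove n q q' ∧ HasLongSurvival e x C k z (insert q' Q) := by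
  obtain ⟨q', hq'⟩ := exists_forall_lt_omega_one
    (P := fun q' α ↦ IsMove n q q' ∧ ∃ y : ℕ → RatVec,
      IsTailSequence (Submodule.span ℚ (Set.range x)) y ∧
        (∀ i < k, y i = z i) ∧ ∀ q ∈ insert q' Q, Survives e x y C α q)
    (fun q' α β hαβ ⟨hmove, y, hy, hyz, hQ⟩ ↦
      ⟨hmove, y, hy, hyz, fun q hq ↦ (hQ q hq).anti hαβ⟩)
    (fun α hα ↦ by
      obtain ⟨y, hy, hyz, hQ⟩ := h _ ((Cardinal.isSuccLimit_omega 1).succ_lt hα)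
      obtain ⟨q', hmove, hq'⟩ := (survives_iff.1 (hQ q hq)).2 α (Order.lt_succ α) n
      exact ⟨q', hmove, y, hy, hyz, (Finset.forall_mem_insert ..).2
        ⟨hq', fun p hp ↦ (hQ p hp).anti (Order.le_succ α)⟩⟩)
  exact ⟨q', (hq' 0 (Ordinal.omega_pos 1)).1, fun α hα ↦ (hq' α hα).2⟩

theorem HasLongSurvival.exists_update_move (h : HasLongSurvival e x C k z Q) (q : TreePosition)
    (n : ℕ) : ∃ z' Q', HasLongSurvival e x C (k + 1) z' Q' ∧ (∀ i < k, z' i = z i) ∧ Q ⊆ Q' ∧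
      (q ∈ Q → ∃ q' ∈ Q', IsMove n q q') := by
  obtain ⟨z', hz', h'⟩ := h.exists_update
  by_cases hq : q ∈ Q
  · obtain ⟨q', hmove, hq'⟩ := h'.exists_move hq n
    exact ⟨z', insert q' Q, hq', hz', Finset.subset_insert _ _,
      fun _ ↦ ⟨q', Finset.mem_insert_self _ _, hmove⟩⟩
  · exact ⟨z', Q, h', hz', subset_rfl, fun h ↦ (hq h).elim⟩

theorem HasLongSurvival.exists_seq (h : HasLongSurvival e x C 0 z {q}) :
    ∃ s : ℕ → (ℕ → RatVec) × Finset TreePosition, (∀ k, HasLongSurvival e x C k (s k).1 (s k).2) ∧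
      q ∈ (s 0).2 ∧ (∀ k, ∀ i < k, (s (k + 1)).1 i = (s k).1 i) ∧ (Monotone fun k ↦ (s k).2) ∧
        ∀ k, ∀ p ∈ (s k).2, ∀ n, ∃ m, ∃ p' ∈ (s m).2, IsMove n p p' := by
  obtain ⟨g, hg⟩ := exists_surjective_nat (TreePosition × ℕ)
  obtain ⟨s, hs⟩ := exists_seq_of_forall_exists_succ
    (P := fun k s ↦ HasLongSurvival e x C k s.1 s.2 ∧ q ∈ s.2)
    (r := fun k s s' ↦ (∀ i < k, s'.1 i = s.1 i) ∧ s.2 ⊆ s'.2 ∧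
      ((g k.unpair.1).1 ∈ s.2 → ∃ p' ∈ s'.2, IsMove (g k.unpair.1).2 (g k.unpair.1).1 p'))
    ⟨(z, {q}), h, Finset.mem_singleton_self q⟩
    (fun k s hs ↦ by
      obtain ⟨z', Q', h', hz', hQ', hmove⟩ :=
        hs.1.exists_update_move (g k.unpair.1).1 (g k.unpair.1).2
      exact ⟨(z', Q'), ⟨h', hQ' hs.2⟩, hz', hQ', hmove⟩)
  have hmono : Monotone fun k ↦ (s k).2 := monotone_nat_of_le_succ fun k ↦ (hs k).2.2.1
  refine ⟨s, fun k ↦ (hs k).1.1, (hs 0).1.2, fun k ↦ (hs k).2.1, hmono, fun k p hp n ↦ ?_⟩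
  obtain ⟨c, hc⟩ := hg (p, n)
  have hmove := (hs (Nat.pair c k)).2.2.2
  rw [Nat.unpair_pair, hc] at hmove
  exact ⟨_, hmove (hmono (Nat.right_le_pair c k) hp)⟩

theorem HasLongSurvival.exists_forall_isLegal (h : HasLongSurvival e x C 0 z {q}) :
    ∃ (y : ℕ → RatVec) (Q : Set TreePosition),
      IsTailSequence (Submodule.span ℚ (Set.range x)) y ∧ q ∈ Q ∧
        ∀ p ∈ Q, IsLegal e x y C p ∧ ∀ n, ∃ p' ∈ Q, IsMove n p p' := by
  obtain ⟨s, hs, hq, hagree, hmono, hmove⟩ := h.exists_seq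
  have hlim (m i : ℕ) (hi : i < m) : (s m).1 i = (s (i + 1)).1 i := by
    induction m, hi using Nat.le_induction with
    | base => rfl
    | succ m hi ih => rw [hagree m i hi, ih]
  refine ⟨fun i ↦ (s (i + 1)).1 i, {p | ∃ k, p ∈ (s k).2}, fun i ↦ ?_, ⟨0, hq⟩, ?_⟩
  · obtain ⟨y, hy, hys, -⟩ := hs (i + 1) 0 (Ordinal.omega_pos 1)
    simp only [← hys i i.lt_succ_self]
    exact hy i
  rintro p ⟨k, hk⟩
  refine ⟨?_, fun n ↦ ?_⟩
  · obtain ⟨y, -, hys, hQ⟩ := hs (max k p.1.length) 0 (Ordinal.omega_pos 1)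
    refine (hQ p (hmono (le_max_left _ _) hk)).isLegal.congr fun i hi ↦ ?_
    have hi' := hi.trans_le (le_max_right k _)
    rw [hys i hi', hlim _ i hi']
  · obtain ⟨m, p', hp', hpp'⟩ := hmove k p hk n
    exact ⟨p', ⟨m, hp'⟩, hpp'⟩

theorem exists_prefix_of_forall_exists_isMove {Q : Set TreePosition}
    (hQ : ∀ p ∈ Q, ∀ n, ∃ p' ∈ Q, IsMove n p p') (hq : q ∈ Q) (n m : ℕ) :
    ∃ q' ∈ Q, q.1 <+: q'.1 ∧ m ≤ q'.1.length ∧ ∀ i ∈ q'.2, i ∈ q.2 ∨ n ≤ i := by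
  induction m with
  | zero => exact ⟨q, hq, List.prefix_rfl, Nat.zero_le _, fun i hi ↦ .inl hi⟩
  | succ m ih =>
    obtain ⟨q', hq', hpre, hlen, hmem⟩ := ih
    obtain ⟨q'', hq'', ⟨u, hu⟩, -, hmem'⟩ := hQ q' hq' n
    refine ⟨q'', hq'', hu ▸ hpre.trans (List.prefix_append _ _), ?_, fun i hi ↦ ?_⟩
    · rw [hu, List.length_append, List.length_singleton]
      exact Nat.succ_le_succ hlen
    · exact (hmem' i hi).elim (hmem i) .inr

theorem mem_span_unitVectors {d : RatVec} (h : suppEnd d ≤ N) :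
    d ∈ Submodule.span ℚ (unitVectors N : Set RatVec) := by
  rw [suppEnd_le_iff, Finsupp.supported_eq_span_single] at h
  rwa [unitVectors, Finset.coe_image, Finset.coe_range]

theorem IsLegal.isAnswer {G A : Finset RatVec} {q q' : TreePosition} {m : ℕ}
    (hx : ∀ i, x i ∈ tailSubmodule i)
    (hG : ∀ i ∈ q.2, x i ∈ Submodule.span ℚ (G : Set RatVec)) (h : IsLegal e x y C q')
    (hpre : q.1 <+: q'.1) (hlen : m ≤ q'.1.length) (hmem : ∀ i ∈ q'.2, i ∈ q.2 ∨ n ≤ i)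
    (hA : ∀ a ∈ A, a ∈ Submodule.span ℚ (y '' Set.Iio m)) :
    IsAnswer (Submodule.span ℚ (Set.range x)) n A (listGraph y q.1) G (listGraph y q'.1)
      ((q'.2 \ q.2).image x) ∧
    ∀ i ∈ q'.2, x i ∈ Submodule.span ℚ (↑(G ∪ (q'.2 \ q.2).image x) : Set RatVec) := by
  have hspan : ∀ i ∈ q'.2, x i ∈ Submodule.span ℚ (↑(G ∪ (q'.2 \ q.2).image x) : Set RatVec) := by
    intro i hi
    by_cases hiq : i ∈ q.2
    · exact Submodule.span_mono (Finset.coe_subset.2 Finset.subset_union_left) (hG i hiq)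
    · exact Submodule.subset_span (Finset.mem_union_right _
        (Finset.mem_image_of_mem _ (Finset.mem_sdiff.2 ⟨hi, hiq⟩)))
  refine ⟨⟨listGraph_subset hpre, ?_, ?_, fun a ha ↦ ?_⟩, hspan⟩
  · simp only [Finset.forall_mem_image, Finset.mem_sdiff]
    exact fun i hi ↦ ⟨Submodule.subset_span ⟨i, rfl⟩,
      tailSubmodule_anti ((hmem i hi.1).resolve_left hi.2) (hx i)⟩
  · simp only [listGraph, Finset.forall_mem_image, Finset.mem_range]
    intro i hi
    rw [List.getD_eq_getElem _ _ hi]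
    refine Submodule.span_le.2 ?_ (h.mem_span _ (List.getElem_mem hi))
    rintro _ ⟨j, hj, rfl⟩
    exact hspan j hj
  · have hle : Submodule.span ℚ (y '' Set.Iio m) ≤
        (Submodule.span ℚ (listGraph y q'.1 : Set (RatVec × RatVec))).map
          (LinearMap.fst ℚ RatVec RatVec) := by
      rw [Submodule.span_le]
      rintro _ ⟨i, hi, rfl⟩
      exact ⟨_, Submodule.subset_span (Finset.mem_image_of_mem _
        (Finset.mem_range.2 (lt_of_lt_of_le hi hlen))), rfl⟩
    obtain ⟨⟨_, u⟩, hu, rfl⟩ := hle (hA a ha)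
    exact ⟨u, hu⟩

theorem exists_wins_of_forall_exists_isMove (hx : ∀ i, x i ∈ tailSubmodule i)
    {S : Finset ℕ} {Q : Set TreePosition} (hQS : ([], S) ∈ Q)
    (hQ : ∀ q ∈ Q, IsLegal e x y C q ∧ ∀ n, ∃ q' ∈ Q, IsMove n q q') :
    ∃ N, Wins e C (Submodule.span ℚ (Set.range y)) (Submodule.span ℚ (Set.range x)) ∅
      (unitVectors N) := by
  refine ⟨S.sup fun i ↦ suppEnd (x i), {p | ∃ q ∈ Q, p.1 = listGraph y q.1 ∧
    ∀ i ∈ q.2, x i ∈ Submodule.span ℚ (p.2 : Set RatVec)}, ⟨_, hQS, rfl, fun i hi ↦ ?_⟩, ?_⟩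
  · exact mem_span_unitVectors (Finset.le_sup (f := fun i ↦ suppEnd (x i)) hi)
  rintro _ G ⟨q, hq, rfl, hG⟩
  refine ⟨(hQ q hq).1.isPartialIso, fun n A hA ↦ ?_⟩
  obtain ⟨m, hm⟩ := exists_forall_mem_span_image (fun _ _ ↦ Set.Iio_subset_Iio)
    (by simpa only [Set.iUnion_Iio, Set.image_univ] using hA)
  obtain ⟨q', hq', hpre, hlen, hmem⟩ :=
    exists_prefix_of_forall_exists_isMove (fun p hp ↦ (hQ p hp).2) hq n m
  obtain ⟨hans, hspan⟩ := (hQ q' hq').1.isAnswer hx hG hpre hlen hmem hm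
  exact ⟨_, _, hans, q', hq', rfl, hspan⟩

theorem exists_forall_not_survives (hx : ∀ i, x i ∈ tailSubmodule i)
    (hno : ∀ C N, ¬WinsWithin e C N (Submodule.span ℚ (Set.range x))) :
    ∃ α < Ordinal.omega 1, ∀ (C : ℕ) (S : Finset ℕ) (y : ℕ → RatVec),
      IsTailSequence (Submodule.span ℚ (Set.range x)) y → ¬Survives e x y C α ([], S) := by
  have hlong (s : ℕ × Finset ℕ) : ¬HasLongSurvival e x s.1 0 0 {([], s.2)} := fun h ↦ by
    obtain ⟨y, Q, hy, hQS, hQ⟩ := h.exists_forall_isLegal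
    obtain ⟨N, hw⟩ := exists_wins_of_forall_exists_isMove hx hQS hQ
    exact hno s.1 N ⟨_, hy.span_range_le, hy.meetsTails, hw⟩
  simp only [HasLongSurvival, not_forall, not_exists, not_and] at hlong
  choose α hα hαy using hlong
  refine ⟨⨆ s, α s, Ordinal.iSup_lt_omega_one hα, fun C S y hy h ↦ ?_⟩
  obtain ⟨q, hq, hqα⟩ := hαy (C, S) y hy fun i hi ↦ (Nat.not_lt_zero i hi).elim
  rw [Finset.mem_singleton.1 hq] at hqα
  exact hqα (h.anti (Ordinal.le_iSup α (C, S)))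

end Survival

section TreeRank

theorem acc_rank_le_of_forall_lt {γ : Type*} {r : γ → γ → Prop} {f : γ → Ordinal}
    (hf : ∀ a b, r a b → f a < f b) {a : γ} (h : Acc r a) : h.rank ≤ f a := by
  induction h with
  | intro a h ih =>
    rw [Acc.rank_eq]
    exact ciSup_le' fun b ↦ Order.succ_le_of_lt ((ih b.1 b.2).trans_lt (hf _ _ b.2))

theorem exists_lt_of_isPrefix {γ : Type*} {T : Set (List γ)} {D : List γ → Ordinal → Prop}
    (hpre : ∀ l ∈ T, ∀ l', l' <+: l → l' ∈ T)
    (hstep : ∀ l β w, D l β → l ++ [w] ∈ T → ∃ β' < β, D (l ++ [w]) β')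
    {s t : List γ} {β : Ordinal} (hs : D s β) (ht : t ∈ T) (hst : s <+: t) (hne : s ≠ t) :
    ∃ β' < β, D t β' := by
  induction t using List.reverseRecOn with
  | nil => exact (hne (List.prefix_nil.1 hst)).elim
  | append_singleton t w ih =>
    obtain rfl | hst := List.prefix_concat_iff.1 hst
    · exact (hne rfl).elim
    by_cases h : s = t
    · exact hstep t β w (h ▸ hs) ht
    · obtain ⟨β', hβ', ht'⟩ := ih (hpre _ ht _ (List.prefix_append _ _)) hst h
      obtain ⟨β'', hβ'', hD⟩ := hstep t β' w ht' ht
      exact ⟨β'', hβ''.trans hβ', hD⟩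

theorem treeRank_le_succ {γ : Type} {T : Set (List γ)} {α : Ordinal.{0}}
    (D : List γ → Ordinal.{0} → Prop)
    (hpre : ∀ l ∈ T, ∀ l', l' <+: l → l' ∈ T) (h0 : D [] α)
    (hstep : ∀ l β w, D l β → l ++ [w] ∈ T → ∃ β' < β, D (l ++ [w]) β') :
    treeRank T ≤ ((Order.succ α : Ordinal) : WithTop Ordinal) := by
  have hD : ∀ t ∈ T, ∃ β ≤ α, D t β := fun t ht ↦ by
    by_cases h : [] = t
    · exact ⟨α, le_rfl, h ▸ h0⟩
    · obtain ⟨β, hβ, hD⟩ := exists_lt_of_isPrefix hpre hstep h0 ht List.nil_prefix h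
      exact ⟨β, hβ.le, hD⟩
  let f : T → Ordinal.{0} := fun t ↦ sInf {β | D t β}
  have hf : ∀ t s : T, s.val <+: t.val ∧ s.val ≠ t.val → f t < f s := fun t s hst ↦ by
    obtain ⟨β₀, -, h₀⟩ := hD s s.2
    obtain ⟨β, hβ, h⟩ := exists_lt_of_isPrefix hpre hstep (csInf_mem (s := {β | D s β}) ⟨β₀, h₀⟩)
      t.2 hst.1 hst.2
    exact (csInf_le' h).trans_lt hβ
  have hwf : WellFounded fun t s : T ↦ s.val <+: t.val ∧ s.val ≠ t.val :=
    Subrelation.wf (fun {t s} hst ↦ hf t s hst) (InvImage.wf f wellFounded_lt)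
  rw [treeRank, dif_pos hwf, WithTop.coe_le_coe]
  refine ciSup_le' fun t ↦ Order.succ_le_succ ?_
  obtain ⟨β, hβ, h⟩ := hD t t.2
  exact (acc_rank_le_of_forall_lt hf _).trans ((csInf_le' h).trans hβ)

variable {𝒲 : Type} [NormedAddCommGroup 𝒲] [NormedSpace ℝ 𝒲] {x : ℕ → 𝒲} {Y : Set 𝒲} {K : ℝ}
  {α : Ordinal.{0}}

theorem embIndex_le (h : ∀ K : ℝ, 1 ≤ K → treeRank (embTree x Y K) ≤ (α : WithTop Ordinal)) :
    embIndex x Y ≤ (α : WithTop Ordinal) := by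
  rw [embIndex, if_neg, WithTop.coe_le_coe]
  · refine csSup_le' ?_
    rintro o ⟨K, hK, ho⟩
    exact WithTop.coe_le_coe.1 (ho ▸ h K hK)
  · rintro ⟨K, hK, htop⟩
    exact WithTop.coe_ne_top (top_le_iff.1 (htop ▸ h K hK))

theorem mem_embTree_of_isPrefix {l l' : List 𝒲} (h : l ∈ embTree x Y K) (hl : l' <+: l) :
    l' ∈ embTree x Y K := by
  refine ⟨fun v hv ↦ h.1 v (hl.subset hv), (h.2.of_le hl.length_le).congr_left fun i hi ↦ ?_⟩
  obtain ⟨r, rfl⟩ := hl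
  exact List.getD_append _ _ _ _ hi

end TreeRank

section IntervalSequences

theorem exists_strictMono_forall_le {κ : Type*} [Nonempty κ] [Countable κ] (f : κ → Finset ℕ → ℕ) :
    ∃ a : ℕ → ℕ, StrictMono a ∧
      ∀ c, ∃ k, ∀ j ≥ k, ∀ S ⊆ Finset.range (a j), f c S ≤ a (j + 1) := by
  obtain ⟨g, hg⟩ := exists_surjective_nat κ
  obtain ⟨a, ha⟩ := exists_seq_of_forall_exists_succ (P := fun _ _ ↦ True)
    (r := fun j m m' ↦ m < m' ∧ ∀ i ≤ j, ∀ S ⊆ Finset.range m, f (g i) S ≤ m') ⟨0, trivial⟩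
    (fun j m _ ↦ by
      refine ⟨m + 1 + (Finset.Iic j).sup fun i ↦ (Finset.range m).powerset.sup (f (g i)), trivial,
        by omega, fun i hi S hS ↦ ?_⟩
      exact ((Finset.le_sup (f := f (g i)) (Finset.mem_powerset.2 hS)).trans
        (Finset.le_sup (f := fun i ↦ (Finset.range m).powerset.sup (f (g i)))
          (Finset.mem_Iic.2 hi))).trans (Nat.le_add_left _ _))
  refine ⟨a, strictMono_nat_of_lt_succ fun j ↦ (ha j).2.1, fun c ↦ ?_⟩
  obtain ⟨i, rfl⟩ := hg c
  exact ⟨i, fun j hj ↦ (ha j).2.2 i hj⟩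

theorem intervalSeq_Ico {a : ℕ → ℕ} (ha : StrictMono a) :
    IntervalSeq fun j ↦ Finset.Ico (a j) (a (j + 1)) := by
  refine ⟨fun j ↦ ⟨a j, a (j + 1) - 1, ?_, ?_⟩, fun j i hi k hk ↦ ?_⟩
  · exact Nat.le_sub_one_of_lt (ha j.lt_succ_self)
  · have := ha j.lt_succ_self
    grind
  · exact (Finset.mem_Ico.1 hi).2.trans_le (Finset.mem_Ico.1 hk).1

end IntervalSequences

section RationalApproximation

variable {𝒲 : Type} [NormedAddCommGroup 𝒲] [NormedSpace ℝ 𝒲] {x y : ℕ → RatVec} {Y l v : ℕ → 𝒲}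
  {m : ℕ → ℕ} {K : ℝ} {C n : ℕ}

theorem IsBlockSeq.exists_mem_span_image_Ico {e : ℕ → 𝒲} (hY : IsBlockSeq e Y) :
    ∃ N : ℕ → ℕ, StrictMono N ∧
      ∀ k, Y k ∈ Submodule.span ℝ (e '' Set.Ico (N k) (N (k + 1))) := by
  obtain ⟨hne, D, hD, hlt⟩ := hY
  choose a ha using hD
  have hDne (k : ℕ) : (D k).Nonempty := by
    rw [Finset.nonempty_iff_ne_empty]
    intro h
    exact hne k (by rw [ha k, h, Finset.sum_empty])
  refine ⟨fun k ↦ (D k).min' (hDne k), strictMono_nat_of_lt_succ fun k ↦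
    hlt k _ (Finset.min'_mem _ _) _ (Finset.min'_mem _ _), fun k ↦ ?_⟩
  rw [ha k]
  exact Submodule.sum_mem _ fun i hi ↦ Submodule.smul_mem _ _ (Submodule.subset_span
    ⟨i, ⟨Finset.min'_le _ i hi, hlt k i hi _ (Finset.min'_mem _ _)⟩, rfl⟩)

theorem IsBlock.isBlockSeq (b : SchauderBasis ℝ 𝒲) (hx : IsBlock x) :
    IsBlockSeq b fun i ↦ ratCombination b (x i) := by
  refine ⟨hx.ratCombination_ne_zero b, fun n ↦ (x n).support,
    fun n ↦ ⟨fun i ↦ (x n i : ℝ), ratCombination_apply _ _⟩, fun n i hi j hj ↦ ?_⟩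
  have hi' := Finset.mem_range.1 (suppEnd_le_iff_support_subset.1 le_rfl hi)
  exact hi'.trans_le ((Finsupp.mem_supported _ _).1 (hx.succ_mem n) hj)

theorem IsBlockedBy.seqEquiv_two_of_seqEquiv [CompleteSpace 𝒲] {b : SchauderBasis ℝ 𝒲}
    (h : IsBlockedBy b Y m) (hK : 0 < K) (hl : SeqEquiv K n l Y)
    (hlv : ∀ k, ‖l k - v k‖ ≤ blockTolerance b (1 / (2 * K)) k * ‖Y k‖) : SeqEquiv 2 n l v :=
  seqEquiv_two_of_norm_sub_le fun a ↦ by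
    calc ‖∑ i ∈ Finset.range n, a i • l i - ∑ i ∈ Finset.range n, a i • v i‖
        = ‖∑ i ∈ Finset.range n, a i • (l i - v i)‖ := by
          simp only [smul_sub, Finset.sum_sub_distrib]
      _ ≤ 1 / (2 * K) * ‖∑ i ∈ Finset.range n, a i • Y i‖ :=
          h.norm_sum_le_of_le_blockTolerance (by positivity) hlv a n
      _ ≤ 1 / (2 * K) * (K * ‖∑ i ∈ Finset.range n, a i • l i‖) := by
          gcongr; exact (hl a).2
      _ = 1 / 2 * ‖∑ i ∈ Finset.range n, a i • l i‖ := by field_simp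

theorem exists_isTailSequence_norm_sub_le (b : SchauderBasis ℝ 𝒲) (hx : IsBlock x)
    {N : ℕ → ℕ} (hN : StrictMono N) (hY : ∀ k, Y k ≠ 0) (hYN : ∀ k, Y k ∈
      Submodule.span ℝ ((fun i ↦ ratCombination b (x i)) '' Set.Ico (N k) (N (k + 1)))) :
    ∃ y : ℕ → RatVec, IsTailSequence (Submodule.span ℚ (Set.range x)) y ∧
      ∀ k, ‖Y k - ratCombination b (y k)‖ ≤ blockTolerance b (1 / 2) k * ‖Y k‖ := by
  have hdist (k : ℕ) : ∃ d ∈ Submodule.span ℚ (x '' Set.Ico (N k) (N (k + 1))),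
      ‖Y k - ratCombination b d‖ < min ‖Y k‖ (blockTolerance b (1 / 2) k * ‖Y k‖) := by
    have hYk := norm_pos_iff.2 (hY k)
    refine exists_mem_span_norm_sub_lt (ratCombination b) ?_
      (lt_min hYk (mul_pos (blockTolerance_pos b (by norm_num) k) hYk))
    rw [Set.image_image]
    exact Submodule.le_topologicalClosure _ (hYN k)
  choose y hyN hyY using hdist
  refine ⟨y, fun k ↦ ⟨fun h0 ↦ ?_, Submodule.span_mono (Set.image_subset_range _ _) (hyN k), ?_⟩,
    fun k ↦ ((hyY k).trans_le (min_le_right _ _)).le⟩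
  · have hlt := (hyY k).trans_le (min_le_left _ _)
    rw [h0, map_zero, sub_zero] at hlt
    exact lt_irrefl _ hlt
  · refine Submodule.span_le.2 ?_ (hyN k)
    rintro _ ⟨i, hi, rfl⟩
    exact tailSubmodule_anti (hN.le_apply.trans hi.1) (hx.mem_tailSubmodule i)

theorem IsBlockSeq.exists_isTailSequence [CompleteSpace 𝒲] {b : SchauderBasis ℝ 𝒲}
    (hx : IsBlock x) (hY : IsBlockSeq (fun i ↦ ratCombination b (x i)) Y) :
    ∃ (m : ℕ → ℕ) (y : ℕ → RatVec), IsBlockedBy b Y m ∧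
      IsTailSequence (Submodule.span ℚ (Set.range x)) y ∧
      ∀ n, SeqEquiv 2 n Y fun i ↦ ratCombination b (y i) := by
  obtain ⟨N, hN, hYN⟩ := hY.exists_mem_span_image_Ico
  have hblk := (hx.isBlockedBy b).of_mem_span_image_Ico hN.monotone hYN
  obtain ⟨y, hy, hYy⟩ := exists_isTailSequence_norm_sub_le b hx hN hY.1 hYN
  exact ⟨_, y, hblk, hy, hblk.seqEquiv_two hYy⟩

theorem SeqEquiv.isPartialIso_listGraph {e : ℕ → 𝒲} {v : List RatVec} (hK : 0 < K) (hKC : K ≤ C)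
    (h : SeqEquiv K v.length (fun i ↦ ratCombination e (y i))
      fun i ↦ ratCombination e (v.getD i 0)) :
    IsPartialIso e C (listGraph y v : Set (RatVec × RatVec)) := by
  have himage : ratCombinationProd e '' (listGraph y v : Set (RatVec × RatVec)) =
      (fun i ↦ (ratCombination e (y i), ratCombination e (v.getD i 0))) '' Set.Iio v.length := by
    rw [listGraph, Finset.coe_image, Finset.coe_range, Set.image_image]
    rfl
  rw [IsPartialIso, himage]
  exact (h.isIsoGraph_span_image hK).mono_const hKC

/-- The rational vectors in the list `v` represent the vectors in the list `l` up to the errors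
`ε`. -/
def IsNear (e : ℕ → 𝒲) (ε : ℕ → ℝ) (l : List 𝒲) (v : List RatVec) : Prop :=
  v.length = l.length ∧ ∀ i, ‖l.getD i 0 - ratCombination e (v.getD i 0)‖ ≤ ε i

variable {e : ℕ → 𝒲} {ε : ℕ → ℝ}

theorem isNear_nil (hε : ∀ i, 0 ≤ ε i) : IsNear e ε [] [] :=
  ⟨rfl, fun i ↦ by simpa only [List.getD_nil, map_zero, sub_zero, norm_zero] using hε i⟩

theorem IsNear.append_singleton {l : List 𝒲} {v : List RatVec} {w : 𝒲} {u : RatVec}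
    (h : IsNear e ε l v) (hε : ∀ i, 0 ≤ ε i) (hw : ‖w - ratCombination e u‖ ≤ ε l.length) :
    IsNear e ε (l ++ [w]) (v ++ [u]) := by
  refine ⟨by simp only [List.length_append, h.1, List.length_singleton], fun i ↦ ?_⟩
  obtain hi | rfl | hi := lt_trichotomy i l.length
  · rw [List.getD_append _ _ _ _ hi, List.getD_append _ _ _ _ (h.1.symm ▸ hi)]
    exact h.2 i
  · rw [List.getD_append_right _ _ _ _ le_rfl, List.getD_append_right _ _ _ _ h.1.le, h.1,
      Nat.sub_self]
    exact hw
  · rw [List.getD_eq_default _ _ (by simpa using hi),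
      List.getD_eq_default _ _ (by simpa [h.1] using hi), map_zero, sub_zero, norm_zero]
    exact hε i

/-- The chain `y ∼ Y ∼ l ∼ v` with constants `2`, `K`, `2` gives the constant `4 * K`. -/
theorem IsNear.isPartialIso [CompleteSpace 𝒲] {b : SchauderBasis ℝ 𝒲} {l : List 𝒲}
    {v : List RatVec} (hY : IsBlockedBy b Y m)
    (hYy : ∀ n, SeqEquiv 2 n Y fun i ↦ ratCombination b (y i)) (hK : 0 < K) (hKC : 4 * K ≤ C)
    (h : IsNear b (fun k ↦ blockTolerance b (1 / (2 * K)) k * ‖Y k‖) l v)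
    (hl : SeqEquiv K l.length (fun i ↦ l.getD i 0) Y) :
    IsPartialIso b C (listGraph y v : Set (RatVec × RatVec)) := by
  have hyv := (((hYy l.length).symm two_pos).trans hK.le (hl.symm hK)).trans zero_le_two
    (hY.seqEquiv_two_of_seqEquiv hK hl h.2)
  refine SeqEquiv.isPartialIso_listGraph (by positivity) ?_ (h.1 ▸ hyv)
  linarith

end RationalApproximation

section Residual

/-- The indices outside the intervals `I j`, `j ∈ A`. -/
def residualIndices (I : ℕ → Finset ℕ) (A : Set ℕ) : Set ℕ := {i | ∀ j ∈ A, i ∉ I j}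

open Classical in
/-- The indices below `a j` outside the intervals `[a k, a (k + 1))`, `k ∈ A`. -/
noncomputable def residualIndicesBelow (a : ℕ → ℕ) (A : Set ℕ) (j : ℕ) : Finset ℕ :=
  {i ∈ Finset.range (a j) | i ∈ residualIndices (fun k ↦ Finset.Ico (a k) (a (k + 1))) A}

variable {𝒲 : Type} [NormedAddCommGroup 𝒲] [NormedSpace ℝ 𝒲] {a : ℕ → ℕ} {A : Set ℕ} {j j' i : ℕ}

theorem residualSpace_eq (f : RatVec → 𝒲) (x : ℕ → RatVec) (I : ℕ → Finset ℕ) (A : Set ℕ) :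
    residualSpace (fun i ↦ f (x i)) I A = closedSpan (f '' (x '' residualIndices I A)) := by
  rw [residualSpace, Set.image_image]
  congr 1
  ext v
  exact exists_congr fun i ↦ and_congr_right fun _ ↦ eq_comm

theorem mem_residualIndicesBelow : i ∈ residualIndicesBelow a A j ↔
    i < a j ∧ i ∈ residualIndices (fun k ↦ Finset.Ico (a k) (a (k + 1))) A := by
  classical
  rw [residualIndicesBelow, Finset.mem_filter, Finset.mem_range]

theorem residualIndicesBelow_mono (ha : Monotone a) : Monotone (residualIndicesBelow a A) :=
  fun _ _ hj _ hi ↦ mem_residualIndicesBelow.2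
    ((mem_residualIndicesBelow.1 hi).imp_left fun h ↦ h.trans_le (ha hj))

theorem residualIndicesBelow_subset : residualIndicesBelow a A j ⊆ Finset.range (a j) :=
  fun _ hi ↦ Finset.mem_range.2 (mem_residualIndicesBelow.1 hi).1

theorem iUnion_residualIndicesBelow (ha : StrictMono a) :
    ⋃ j, (residualIndicesBelow a A j : Set ℕ) =
      residualIndices (fun k ↦ Finset.Ico (a k) (a (k + 1))) A := by
  ext i
  simp only [Set.mem_iUnion, Finset.mem_coe, mem_residualIndicesBelow]
  exact ⟨fun ⟨_, h⟩ ↦ h.2, fun h ↦ ⟨i + 1, ha.le_apply, h⟩⟩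

theorem isMove_residualIndicesBelow (ha : Monotone a) (hj : j ∈ A) (hjj' : j ≤ j')
    (v : List RatVec) (u : RatVec) : IsMove (a (j + 1)) (v, residualIndicesBelow a A j)
      (v ++ [u], residualIndicesBelow a A j') where
  exists_append := ⟨u, rfl⟩
  subset := residualIndicesBelow_mono ha hjj'
  mem_or_le i hi := by
    obtain ⟨-, hi⟩ := mem_residualIndicesBelow.1 hi
    by_contra! h
    by_cases hij : i < a j
    · exact h.1 (mem_residualIndicesBelow.2 ⟨hij, hi⟩)
    · exact hi j hj (Finset.mem_Ico.2 ⟨not_lt.1 hij, h.2⟩)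

end Residual

section Threshold

variable {E : Type*} [NormedAddCommGroup E] [NormedSpace ℝ E] (e : ℕ → E) (x y : ℕ → RatVec)

/-- From the position `q`, each move which only adds indices `≥ n` strictly decreases the least
ordinal for which survival fails. -/
def IsThreshold (C : ℕ) (q : TreePosition) (n : ℕ) : Prop :=
  ∀ β, ¬Survives e x y C β q → ∀ q', IsMove n q q' → ∃ β' < β, ¬Survives e x y C β' q'

variable {e x y}

theorem IsMove.anti {n n' : ℕ} {q q' : TreePosition} (h : IsMove n' q q') (hn : n ≤ n') :
    IsMove n q q' :=
  ⟨h.exists_append, h.subset, fun i hi ↦ (h.mem_or_le i hi).imp_right hn.trans⟩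

theorem IsThreshold.mono {C n n' : ℕ} {q : TreePosition} (h : IsThreshold e x y C q n)
    (hn : n ≤ n') : IsThreshold e x y C q n' :=
  fun β hβ q' hq' ↦ h β hβ q' (hq'.anti hn)

theorem IsLegal.exists_isThreshold {C : ℕ} {q : TreePosition} (h : IsLegal e x y C q) :
    ∃ n, IsThreshold e x y C q n := by
  by_cases hex : ∃ β, ¬Survives e x y C β q
  · have hmin : ¬Survives e x y C (sInf {β | ¬Survives e x y C β q}) q := csInf_mem hex
    rw [survives_iff] at hmin
    push Not at hmin
    obtain ⟨γ, hγ, n, hn⟩ := hmin h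
    exact ⟨n, fun β hβ q' hq' ↦ ⟨γ, hγ.trans_le (csInf_le' hβ), hn q' hq'⟩⟩
  · exact ⟨0, fun β hβ ↦ (hex ⟨β, hβ⟩).elim⟩

theorem exists_strictMono_forall_isThreshold (e : ℕ → E) (x y : ℕ → RatVec) :
    ∃ a : ℕ → ℕ, StrictMono a ∧ ∀ C v, ∃ k, ∀ j ≥ k, ∀ S ⊆ Finset.range (a j),
      IsLegal e x y C (v, S) → IsThreshold e x y C (v, S) (a (j + 1)) := by
  choose! f hf using fun C q (hq : IsLegal e x y C q) ↦ hq.exists_isThreshold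
  obtain ⟨a, ha, hfa⟩ := exists_strictMono_forall_le
    fun (c : ℕ × List RatVec) S ↦ f c.1 (c.2, S)
  refine ⟨a, ha, fun C v ↦ ?_⟩
  obtain ⟨k, hk⟩ := hfa (C, v)
  exact ⟨k, fun j hj S hS h ↦ (hf C _ h).mono (hk j hj S hS)⟩

end Threshold

section AlphaTight

variable {𝒲 : Type} [NormedAddCommGroup 𝒲] [NormedSpace ℝ 𝒲] {e : ℕ → 𝒲} {x y : ℕ → RatVec} {C : ℕ}
  {a : ℕ → ℕ} {A : Set ℕ} {ε : ℕ → ℝ} {α β : Ordinal.{0}} {l : List 𝒲} {w : 𝒲}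

/-- The node `l` of the embedding tree into the residual space is followed by a position at which
survival fails for `β`: its list of images represents `l`, it uses indices outside the intervals
`[a k, a (k + 1))`, `k ∈ A`, and `j ∈ A` marks an interval which exceeds its threshold. -/
def HasFailingPosition (e : ℕ → 𝒲) (x y : ℕ → RatVec) (C : ℕ) (a : ℕ → ℕ) (A : Set ℕ) (ε : ℕ → ℝ)
    (l : List 𝒲) (β : Ordinal.{0}) : Prop :=
  ∃ j ∈ A, ∃ v, IsNear e ε l v ∧
    (∀ u ∈ v, u ∈ Submodule.span ℚ (x '' (residualIndicesBelow a A j : Set ℕ))) ∧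
    (IsLegal e x y C (v, residualIndicesBelow a A j) →
      IsThreshold e x y C (v, residualIndicesBelow a A j) (a (j + 1))) ∧
    ¬Survives e x y C β (v, residualIndicesBelow a A j)

theorem hasFailingPosition_nil (hA : A.Infinite)
    (hthr : ∀ v, ∃ k, ∀ j ≥ k, ∀ S ⊆ Finset.range (a j),
      IsLegal e x y C (v, S) → IsThreshold e x y C (v, S) (a (j + 1)))
    (hε : ∀ i, 0 ≤ ε i) (hα : ∀ S, ¬Survives e x y C α ([], S)) :
    HasFailingPosition e x y C a A ε [] α := by
  obtain ⟨k, hk⟩ := hthr []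
  obtain ⟨j, hj, hkj⟩ := hA.exists_gt k
  exact ⟨j, hj, [], isNear_nil hε, fun u hu ↦ (List.not_mem_nil hu).elim,
    hk j hkj.le _ residualIndicesBelow_subset, hα _⟩

theorem HasFailingPosition.exists_lt (h : HasFailingPosition e x y C a A ε l β)
    (ha : StrictMono a) (hA : A.Infinite)
    (hthr : ∀ v, ∃ k, ∀ j ≥ k, ∀ S ⊆ Finset.range (a j),
      IsLegal e x y C (v, S) → IsThreshold e x y C (v, S) (a (j + 1)))
    (hε : ∀ i, 0 < ε i)
    (hl : ∀ v, IsNear e ε l v → IsPartialIso e C (listGraph y v : Set (RatVec × RatVec)))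
    (hw : w ∈ closedSpan (ratCombination e '' (x ''
      residualIndices (fun k ↦ Finset.Ico (a k) (a (k + 1))) A))) :
    ∃ β' < β, HasFailingPosition e x y C a A ε (l ++ [w]) β' := by
  obtain ⟨j, hj, v, hlv, hv, hthr_j, hfail⟩ := h
  obtain ⟨u, hu, hwu⟩ := exists_mem_span_norm_sub_lt (ratCombination e) hw (hε l.length)
  rw [← iUnion_residualIndicesBelow ha] at hu
  have hmono : Monotone fun j ↦ (residualIndicesBelow a A j : Set ℕ) := fun _ _ hij ↦
    Finset.coe_subset.2 (residualIndicesBelow_mono ha.monotone hij)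
  obtain ⟨M, hM⟩ := exists_forall_mem_span_image hmono (A := {u})
    (by simpa only [Finset.mem_singleton, forall_eq] using hu)
  obtain ⟨k, hk⟩ := hthr (v ++ [u])
  obtain ⟨j', hj', hlt⟩ := hA.exists_gt (max j (max M k))
  obtain ⟨hjj', hMj', hkj'⟩ : j < j' ∧ M < j' ∧ k < j' := by simpa using hlt
  obtain ⟨β', hβ', hfail'⟩ := hthr_j ⟨hv, hl v hlv⟩ β hfail _
    (isMove_residualIndicesBelow ha.monotone hj hjj'.le v u)
  refine ⟨β', hβ', j', hj', v ++ [u], hlv.append_singleton (fun i ↦ (hε i).le) hwu.le, ?_,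
    hk j' hkj'.le _ residualIndicesBelow_subset, hfail'⟩
  simp only [List.mem_append, List.mem_singleton]
  rintro d (hd | rfl)
  · exact Submodule.span_mono (Set.image_mono (hmono hjj'.le)) (hv d hd)
  · exact Submodule.span_mono (Set.image_mono (hmono hMj'.le)) (hM d (Finset.mem_singleton_self d))

theorem isAlphaTight_of_forall_not_survives [CompleteSpace 𝒲] (b : SchauderBasis ℝ 𝒲)
    (hx : IsBlock x) (hα : ∀ (C : ℕ) (S : Finset ℕ) (y : ℕ → RatVec),
      IsTailSequence (Submodule.span ℚ (Set.range x)) y → ¬Survives b x y C α ([], S)) :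
    IsAlphaTight (fun i ↦ ratCombination b (x i)) (Order.succ α) := by
  intro Y hY
  obtain ⟨m, y, hblk, hy, hYy⟩ := hY.exists_isTailSequence hx
  obtain ⟨a, ha, hthr⟩ := exists_strictMono_forall_isThreshold b x y
  refine ⟨_, intervalSeq_Ico ha, fun A hA ↦ embIndex_le fun K hK ↦ ?_⟩
  rw [residualSpace_eq]
  have hK0 : 0 < K := one_pos.trans_le hK
  obtain ⟨C, hC⟩ := exists_nat_ge (4 * K)
  have hε (k : ℕ) : 0 < blockTolerance b (1 / (2 * K)) k * ‖Y k‖ :=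
    mul_pos (blockTolerance_pos b (by positivity) k) (norm_pos_iff.2 (hY.1 k))
  refine treeRank_le_succ (fun l β ↦ HasFailingPosition b x y C a A
      (fun k ↦ blockTolerance b (1 / (2 * K)) k * ‖Y k‖) l β)
    (fun l hl l' hl' ↦ mem_embTree_of_isPrefix hl hl')
    (hasFailingPosition_nil hA (hthr C) (fun k ↦ (hε k).le) fun S ↦ hα C S y hy)
    fun l β w h hlw ↦ ?_
  have hl := mem_embTree_of_isPrefix hlw (List.prefix_append l [w])
  exact h.exists_lt ha hA (hthr C) hε (fun v hv ↦ hv.isPartialIso hblk hYy hK0 hC hl.2)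
    (hlw.1 w (by simp))

end AlphaTight

/-- If `𝒲` is a Banach space with a Schauder basis `(e n)` such that no
infinite-dimensional closed subspace of `𝒲` is minimal, then there is a block subspace
`𝒳 = [x n]` of `𝒲` and a countable ordinal `α` such that `[x n]` is `α`-tight. -/
theorem exists_alpha_tight_block_subspace
    (𝒲 : Type) [NormedAddCommGroup 𝒲] [NormedSpace ℝ 𝒲] [CompleteSpace 𝒲]
    (e : ℕ → 𝒲) (he : IsSchauderBasis e)
    (hnomin : ∀ X : Submodule ℝ 𝒲, IsClosed (X : Set 𝒲) → ¬FiniteDimensional ℝ X →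
      ¬IsMinimalSpace X) :
    ∃ x : ℕ → 𝒲, IsBlockSeq e x ∧
      ∃ α : Ordinal, α < (Cardinal.aleph 1).ord ∧ IsAlphaTight x α := by
  obtain ⟨b, rfl⟩ := he.exists_schauderBasis
  by_cases hwin : ∀ M, MeetsTails M → ∃ C N, WinsWithin b C N M
  · obtain ⟨X, hXc, hXinf, hXmin⟩ := exists_isMinimalSpace_of_forall_winsWithin b hwin
    exact (hnomin X hXc hXinf hXmin).elim
  · push Not at hwin
    obtain ⟨M, hM, hno⟩ := hwin
    obtain ⟨x, hx, hxM⟩ := MeetsTails.exists_isBlock fun _ ↦ hM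
    have hspan : Submodule.span ℚ (Set.range x) ≤ M :=
      Submodule.span_le.2 (Set.range_subset_iff.2 hxM)
    obtain ⟨α, hα, hfail⟩ := exists_forall_not_survives hx.mem_tailSubmodule fun C N h ↦
      hno C N (h.mono le_rfl le_rfl ⟨0, inf_le_left.trans hspan⟩)
    refine ⟨_, hx.isBlockSeq b, Order.succ α, ?_, isAlphaTight_of_forall_not_survives b hx hfail⟩
    rw [Cardinal.ord_aleph]
    exact (Cardinal.isSuccLimit_omega 1).succ_lt hα

end Rosendal
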